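/- Let K be a finite field of characteristic ℓ ≥ 5 and V a symplectic K-vector space of dimension n. Then every subgroup G of GSp(V) which contains a nontrivial symplectic transvection satisfies at least one of the following: (1) there is a nonzero proper K-subspace S ⊂ V with g(S) = S for all g ∈ G; (2) there exist h ≥ 2 mutually orthogonal nonsingular symplectic K-subspaces S_1, …, S_h ⊂ V, all of the same dimension m = n/h < n, with V = S_1 ⊕ ⋯ ⊕ S_h, such that for every g ∈ G there is a permutation σ_g of {1,…,h} with g(S_i) = S_{σ_g(i)} for all i, and the resulting action of G on {S_1,…,S_h} is transitive; (3) there is a subfield L of K such that the subgroup generated by the symplectic transvections contained in G is conjugate in GSp(V) to Sp_n(L). -/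

import Mathlib

/-!
The proof studies the centers of `G`: the vectors `v ≠ 0` such that `G` contains a nontrivial
`T_v[c]`. Let `G` be irreducible. The centers are permuted by `G`, so they span `V` (`span_ctr`).
Call two centers linked when they are not orthogonal. If the resulting graph is disconnected, the
spans of its components are mutually orthogonal, sum to `V`, and are permuted by `G`; irreducibility
makes the permutation transitive and the spans nonsingular, which is case (2) (`imprimitive`).

Let the graph be connected. After multiplying the form by a scalar, `G` contains some `T_z[1]`. The
main input is Dickson's theorem in characteristic at least `5`: a subgroup of `SL₂(K)` containing
nontrivial elements `(1 a; 0 1)` and `(1 0; b 1)` also contains `(1 0; a⁻¹ 1)` (`ll_inv_mem`). For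
its proof, pass to an extension field over which every element has its eigenvalues, so that an
element acting nontrivially on the projective line has one fixed point if its trace is `± 2` and
two otherwise. Let `q` be the order of the root group at `∞`. Counting fixed points in two ways
shows that the orbit of `∞` has exactly `1 + q` points (`dickson_count`), so its finite part is a
single coset of the root group, and this turns membership in the orbit into membership in the
root group.

Applied to a hyperbolic plane with `ω e f = 1`, this says that inversion exchanges the nonzero
parameters of the transvections along `e` and along `f` (`inv_mem_rg`). By Hua's identity the
parameters along `z` then form a subfield `L` (`hua`), and the same `L` occurs along suitable
multiples of all centers. These multiples, together with `0`, are closed under addition and have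
pairings in `L`, so they constitute an `L`-form `E` of `V` (`exists_lattice`). It contains a
symplectic basis (`exists_symplecticBasis`). A symplectic map preserving `E` is a product of
transvections along vectors of `E`, as multiplication by these transvections can enlarge its fixed
space until it is everything (`mem_of_isSp`). So the transvections in `G` generate the symplectic
group over `L` in this basis (`closure_eq`), and a similitude undoes the rescaling of the form
(`exists_basis_conj`).
-/

open Module

variable {K : Type*} [Field K] {V : Type*} [AddCommGroup V] [Module K V]

/-- `A ∈ GSp(V, ω)`: there is a multiplier `α ∈ Kˣ` with `ω (A v) (A w) = α * ω v w`. -/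
def IsGSp (ω : LinearMap.BilinForm K V) (A : V ≃ₗ[K] V) : Prop :=
  ∃ α : Kˣ, ∀ v w : V, ω (A v) (A w) = (α : K) * ω v w

/-- `A ∈ Sp(V, ω)`: `A` preserves the form. -/
def IsSp (ω : LinearMap.BilinForm K V) (A : V ≃ₗ[K] V) : Prop :=
  ∀ v w : V, ω (A v) (A w) = ω v w

/-- `τ` is a transvection (possibly trivial): there is a line `K•u` containing
`τ v - v` for every `v`; for `τ ≠ 1` this is equivalent to `rank (τ - id) = 1`
together with the line condition. -/
def IsTransvection (τ : V ≃ₗ[K] V) : Prop :=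
  ∃ u : V, ∀ v : V, ∃ c : K, τ v - v = c • u

/-- A symplectic transvection is a transvection lying in `Sp(V, ω)`. -/
def IsSymplecticTransvection (ω : LinearMap.BilinForm K V) (τ : V ≃ₗ[K] V) : Prop :=
  IsTransvection τ ∧ IsSp ω τ

/-- A basis indexed by `Fin m ⊕ Fin m` is symplectic for `ω` if its Gram matrix is the
standard symplectic matrix `J`. -/
def IsSymplecticBasis (ω : LinearMap.BilinForm K V) {m : ℕ} (b : Basis (Fin m ⊕ Fin m) K V) :
    Prop :=
  (∀ i j, ω (b (Sum.inl i)) (b (Sum.inl j)) = 0) ∧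
  (∀ i j, ω (b (Sum.inr i)) (b (Sum.inr j)) = 0) ∧
  (∀ i j, ω (b (Sum.inl i)) (b (Sum.inr j)) = (if i = j then (1 : K) else 0))

/-- `Sp_n(L)`: the elements of `Sp(V, ω)` whose matrix in the fixed (symplectic) basis `b`
has all entries in the subfield `L` of `K`. -/
def SpL (ω : LinearMap.BilinForm K V) {m : ℕ} (b : Basis (Fin m ⊕ Fin m) K V) (L : Subfield K) :
    Set (V ≃ₗ[K] V) :=
  {g | IsSp ω g ∧ ∀ i j, LinearMap.toMatrix b b (g : V →ₗ[K] V) i j ∈ L}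

/-- The symplectic transvection `T_v[c] : u ↦ u + c ⟨u, v⟩ v`, as a linear map. -/
def Tmap (ω : LinearMap.BilinForm K V) (v : V) (c : K) : V →ₗ[K] V :=
  LinearMap.id + c • (ω.flip v).smulRight v

/-! ### Dickson's count -/

/-- The arithmetic of Dickson's count. Here `q` is the order of a root group, `N = 1 + k * q` the size
of the orbit of its fixed point, and `M * E = N * (q * d)` the order of the group modulo its
trivially acting part. `M` is the size of the one further orbit whose points have nontrivial
stabilizers, and `E` is the order of these stabilizers (if there is no such orbit, `M` is the full
order and `E = 1`). -/
theorem dickson_arith {q k d M N E : ℕ} (hq : 5 ≤ q) (hk : 1 ≤ k) (hd : 1 ≤ d) (hdq : d ≤ q - 1)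
    (hN : N = 1 + k * q) (hM : M = N * (q - 2) + 2) (h : M * E = N * (q * d)) : k = 1 := by
  obtain ⟨r, rfl⟩ : ∃ r, q = r + 5 := ⟨q - 5, by omega⟩
  have e1 : r + 5 - 2 = r + 3 := by omega
  rw [e1] at hM
  have hdr : d ≤ r + 4 := by omega
  have hdvd : M ∣ 2 * ((r + 5) * d) := by
    have h1 : M ∣ N * (r + 5) * d := ⟨E, by rw [h]; ring⟩
    have h2 : M ∣ M * (r + 5) * d := ⟨(r + 5) * d, by ring⟩
    have h3 : (M * (r + 5) * d : ℕ) = (N * (r + 5) * d) * (r + 3) + 2 * ((r + 5) * d) := by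
      rw [hM]; ring
    exact (Nat.dvd_add_right (h1.mul_right _)).1 (h3 ▸ h2)
  have hle : M ≤ 2 * ((r + 5) * d) := Nat.le_of_dvd (by positivity) hdvd
  by_contra hne
  obtain h2 | h3 : k = 2 ∨ 3 ≤ k := by omega
  · subst h2
    have hM' : M = (r + 5) * (2 * r + 7) := by rw [hM, hN]; ring
    rw [hM', show 2 * ((r + 5) * d) = (r + 5) * (2 * d) by ring] at hdvd
    have h4 : 2 * r + 7 ∣ 2 * d := Nat.dvd_of_mul_dvd_mul_left (by positivity) hdvd
    obtain ⟨c, hc⟩ := h4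
    have : c < 2 := by
      by_contra hc2
      have : (2 * r + 7) * 2 ≤ (2 * r + 7) * c := Nat.mul_le_mul_left _ (by omega)
      omega
    interval_cases c <;> omega
  · have h5 : (1 + 3 * (r + 5)) * (r + 3) + 2 ≤ M := by
      rw [hM, hN]; gcongr
    have h6 : 2 * ((r + 5) * d) ≤ 2 * ((r + 5) * (r + 4)) := by gcongr
    nlinarith

open MulAction in
/-- Dickson's count. The subgroup `Z` acts trivially, each element of `par` has exactly one fixed
point, and every other element has exactly two. Counting the incidences `g • x = x` in two ways
shows that the orbit of `v` has size `1 + q`. -/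
theorem dickson_count {Γ X : Type*} [Group Γ] [Finite Γ] [Finite X] [MulAction Γ X]
    (Z : Subgroup Γ) (hZ : ∀ g ∈ Z, ∀ x : X, g • x = x)
    (par : Set Γ) (hpar : Disjoint par (Z : Set Γ))
    (h1 : ∀ g ∈ par, Nat.card (fixedBy X g) = 1)
    (h2 : ∀ g ∉ par, g ∉ Z → Nat.card (fixedBy X g) = 2)
    (v : X) {q k d : ℕ} (hq : 5 ≤ q) (hk : 1 ≤ k) (hd : 1 ≤ d) (hdq : d ≤ q - 1)
    (hN : Nat.card (orbit Γ v) = 1 + k * q)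
    (hst : Nat.card (stabilizer Γ v) = Nat.card Z * (q * d))
    (hcp : Nat.card par = Nat.card Z * (Nat.card (orbit Γ v) * (q - 1))) : k = 1 := by
  classical
  have := Fintype.ofFinite Γ
  have := Fintype.ofFinite X
  obtain ⟨N, hNdef⟩ : ∃ N, N = Nat.card (orbit Γ v) := ⟨_, rfl⟩
  obtain ⟨z, hz⟩ : ∃ z, z = Nat.card Z := ⟨_, rfl⟩
  rw [← hNdef] at hN hcp
  rw [← hz] at hst hcp
  have hzpos : 0 < z := hz ▸ Nat.card_pos
  have orbstab : ∀ x : X, Nat.card (orbit Γ x) * Nat.card (stabilizer Γ x) = Nat.card Γ := by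
    intro x
    simpa [Nat.card_eq_fintype_card] using card_orbit_mul_card_stabilizer_eq_card_group Γ x
  have hΓ : Nat.card Γ = N * (z * (q * d)) := by rw [← orbstab v, hst, ← hNdef]
  -- double count of the incidences `g • x = x`
  have hdc : ∑ g : Γ, Nat.card (fixedBy X g) = ∑ x : X, Nat.card (stabilizer Γ x) := by
    have e : (Σ g : Γ, fixedBy X g) ≃ Σ x : X, stabilizer Γ x :=
      { toFun := fun p => ⟨p.2.1, p.1, p.2.2⟩
        invFun := fun p => ⟨p.2.1, p.1, p.2.2⟩
        left_inv := fun _ => rfl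
        right_inv := fun _ => rfl }
    rw [← Nat.card_sigma, ← Nat.card_sigma, Nat.card_congr e]
  have hZfin : (Finset.univ.filter (fun g : Γ => g ∈ Z)).card = z := by
    rw [hz, Nat.card_eq_fintype_card, Fintype.card_subtype]
  have hpfin : (Finset.univ.filter (fun g : Γ => g ∈ par)).card = Nat.card par := by
    rw [Nat.card_eq_fintype_card, Fintype.card_subtype]
  have hL : (∑ g : Γ, (Nat.card (fixedBy X g) : ℤ)) =
      z * Nat.card X + 2 * (Nat.card Γ - z) - Nat.card par := by
    have : ∀ g : Γ, (Nat.card (fixedBy X g) : ℤ) =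
        2 + (if g ∈ Z then (Nat.card X - 2 : ℤ) else 0) - (if g ∈ par then 1 else 0) := by
      intro g
      by_cases hgp : g ∈ par
      · have : g ∉ Z := fun h => Set.disjoint_left.1 hpar hgp h
        rw [h1 g hgp, if_neg this, if_pos hgp]; norm_num
      · by_cases hgZ : g ∈ Z
        · have : fixedBy X g = Set.univ := by ext x; simp [hZ g hgZ x]
          simp [hgp, hgZ, this]
        · rw [h2 g hgp hgZ, if_neg hgZ, if_neg hgp]; norm_num
    rw [Finset.sum_congr rfl fun g _ => this g, Finset.sum_sub_distrib, Finset.sum_add_distrib,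
      ← Finset.sum_filter, ← Finset.sum_filter]
    simp only [Finset.sum_const, hZfin, hpfin, nsmul_eq_mul, Finset.card_univ,
      Nat.card_eq_fintype_card]
    ring
  -- `f` measures how much the stabilizer exceeds `Z`; its sum over an orbit is `|Γ| - |Z| |orbit|`
  let f : X → ℤ := fun x => (Nat.card (stabilizer Γ x) : ℤ) - z
  have hZle : ∀ x : X, Z ≤ stabilizer Γ x := fun x g hg => hZ g hg x
  have hfdvd : ∀ x : X, ∃ E : ℕ, Nat.card (stabilizer Γ x) = z * E := fun x =>
    hz ▸ Subgroup.card_dvd_of_le (hZle x)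
  have hf0 : ∀ x, 0 ≤ f x := by
    intro x
    have := Nat.le_of_dvd Nat.card_pos (Subgroup.card_dvd_of_le (hZle x))
    simp only [f]; omega
  have hforb : ∀ x, ∀ y ∈ orbit Γ x, f y = f x := by
    rintro x _ ⟨g, rfl⟩
    have e1 := orbstab x
    have e2 := orbstab (g • x)
    rw [orbit_eq_iff.2 (mem_orbit x g), ← e1] at e2
    have : 0 < Nat.card (orbit Γ x) := Nat.card_pos_iff.2 ⟨⟨x, mem_orbit_self x⟩, inferInstance⟩
    simp only [f]
    rw [Nat.eq_of_mul_eq_mul_left this e2]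
  have hsumorb : ∀ x, ∑ y ∈ (orbit Γ x).toFinset, f y =
      (Nat.card Γ : ℤ) - z * Nat.card (orbit Γ x) := by
    intro x
    rw [Finset.sum_congr rfl fun y hy => hforb x y (by simpa using hy), Finset.sum_const,
      ← orbstab x]
    simp only [f, Set.toFinset_card, Nat.card_eq_fintype_card, nsmul_eq_mul]
    push_cast; ring
  have htot : ∑ x, f x = (Nat.card Γ : ℤ) - z * (N * (q - 2) + 2) +
      ∑ y ∈ (orbit Γ v).toFinset, f y := by
    rw [hsumorb]
    have : ∑ x, f x = (∑ g : Γ, (Nat.card (fixedBy X g) : ℤ)) - z * Nat.card X := by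
      rw [← Nat.cast_sum, hdc]
      simp [f, mul_comm]
    rw [this, hL, hcp, ← hNdef]
    push_cast [Nat.cast_sub (show 1 ≤ q by omega)]
    ring
  have hsplit := Finset.sum_add_sum_compl (orbit Γ v).toFinset f
  have hS : ∑ x ∈ (orbit Γ v).toFinsetᶜ, f x =
      (Nat.card Γ : ℤ) - z * (N * (q - 2) + 2) := by linarith
  have hq2 : ((q - 2 : ℕ) : ℤ) = q - 2 := by push_cast [Nat.cast_sub (show 2 ≤ q by omega)]; ring
  by_cases hall : ∀ x ∈ (orbit Γ v).toFinsetᶜ, f x = 0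
  · rw [Finset.sum_eq_zero hall] at hS
    refine dickson_arith (E := 1) hq hk hd hdq hN rfl ?_
    have : (z : ℤ) * ((N * (q - 2 : ℕ) + 2) * 1) = z * (N * (q * d)) := by
      rw [hq2]
      have : (Nat.card Γ : ℤ) = N * (z * (q * d)) := by rw [hΓ]; push_cast; ring
      linarith
    have hz' : (z : ℤ) ≠ 0 := by exact_mod_cast hzpos.ne'
    exact_mod_cast mul_left_cancel₀ hz' this
  push Not at hall
  obtain ⟨x, hx, hfx⟩ := hall
  have hbig : ∀ y, f y ≠ 0 → 2 * (z * Nat.card (orbit Γ y) : ℤ) ≤ Nat.card Γ := by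
    intro y hy
    obtain ⟨E, hE⟩ := hfdvd y
    have hE2 : 2 ≤ E := by
      have hp : 0 < Nat.card (stabilizer Γ y) := Nat.card_pos
      by_contra hlt
      interval_cases E
      · omega
      · exact hy (by simp only [f, hE]; simp)
    have := orbstab y
    rw [hE] at this
    have h3 : Nat.card (orbit Γ y) * (z * 2) ≤ Nat.card (orbit Γ y) * (z * E) := by gcongr
    have h4 : 2 * (z * Nat.card (orbit Γ y)) ≤ Nat.card Γ := by linarith
    exact_mod_cast h4
  have hsub : ∀ y, y ∉ orbit Γ v → (orbit Γ y).toFinset ⊆ (orbit Γ v).toFinsetᶜ := by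
    intro y hy w hw
    simp only [Set.mem_toFinset, Finset.mem_compl] at hw ⊢
    intro hw'
    apply hy
    rw [← orbit_eq_iff.2 hw', orbit_eq_iff.2 hw]
    exact mem_orbit_self y
  have hxv : x ∉ orbit Γ v := by simpa using hx
  -- outside the orbit of `v`, only one orbit has stabilizers exceeding `Z`: each such orbit
  -- contributes at least `|Γ| / 2`, whereas the total `hS` is less than `|Γ|`
  have hrest : ∑ y ∈ (orbit Γ v).toFinsetᶜ, f y = ∑ y ∈ (orbit Γ x).toFinset, f y := by
    symm
    refine Finset.sum_subset (hsub x hxv) fun y hy hyx => ?_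
    by_contra hfy
    have hyv : y ∉ orbit Γ v := by simpa using hy
    have hyx' : y ∉ orbit Γ x := by simpa using hyx
    have hdisj : Disjoint (orbit Γ x).toFinset (orbit Γ y).toFinset := by
      rw [Finset.disjoint_left]
      intro w hw hw'
      simp only [Set.mem_toFinset] at hw hw'
      apply hyx'
      rw [← orbit_eq_iff.2 hw, orbit_eq_iff.2 hw']
      exact mem_orbit_self y
    have hle : ∑ w ∈ (orbit Γ x).toFinset ∪ (orbit Γ y).toFinset, f w ≤
        ∑ w ∈ (orbit Γ v).toFinsetᶜ, f w :=
      Finset.sum_le_sum_of_subset_of_nonneg (Finset.union_subset (hsub x hxv) (hsub y hyv))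
        fun w _ _ => hf0 w
    rw [Finset.sum_union hdisj, hsumorb, hsumorb, hS] at hle
    have b1 := hbig x hfx
    have b2 := hbig y hfy
    have : (0 : ℤ) < z * (N * (q - 2) + 2) := by
      rw [← hq2]; positivity
    linarith
  obtain ⟨E, hE⟩ := hfdvd x
  have hz' : (z : ℤ) ≠ 0 := by exact_mod_cast hzpos.ne'
  have hM : Nat.card (orbit Γ x) = N * (q - 2) + 2 := by
    rw [hrest, hsumorb] at hS
    have : (z : ℤ) * Nat.card (orbit Γ x) = z * (N * (q - 2 : ℕ) + 2) := by
      rw [hq2]; linarith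
    exact_mod_cast mul_left_cancel₀ hz' this
  refine dickson_arith (E := E) hq hk hd hdq hN hM ?_
  have := orbstab x
  rw [hE, hΓ] at this
  refine Nat.eq_of_mul_eq_mul_left hzpos ?_
  linarith

/-! ### Elements of `GL₂` acting on the projective line -/

section Dickson

open Matrix Matrix.GeneralLinearGroup OnePoint MulAction

/-- The unipotent matrix `(1 a; 0 1)`. -/
def ur {F : Type*} [Field F] (a : F) : GL (Fin 2) F :=
  ⟨!![1, a; 0, 1], !![1, -a; 0, 1], by simp [one_fin_two], by simp [one_fin_two]⟩

/-- The unipotent matrix `(1 0; b 1)`. -/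
def ll {F : Type*} [Field F] (b : F) : GL (Fin 2) F :=
  ⟨!![1, 0; b, 1], !![1, 0; -b, 1], by simp [one_fin_two], by simp [one_fin_two]⟩

theorem ur_val {F : Type*} [Field F] (a : F) : (ur a).val = !![1, a; 0, 1] := rfl

theorem ll_val {F : Type*} [Field F] (b : F) : (ll b).val = !![1, 0; b, 1] := rfl

theorem ur_add {F : Type*} [Field F] (a b : F) : ur (a + b) = ur a * ur b := by
  ext i j; fin_cases i <;> fin_cases j <;> simp [ur_val, add_comm]

theorem ur_zero {F : Type*} [Field F] : ur (0 : F) = 1 := by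
  ext i j; fin_cases i <;> fin_cases j <;> simp [ur_val]

theorem ur_neg {F : Type*} [Field F] (a : F) : ur (-a) = (ur a)⁻¹ := by
  rw [eq_inv_iff_mul_eq_one, ← ur_add, neg_add_cancel, ur_zero]

/-- The root group of `Γ` at `∞`, as an additive subgroup of the field. -/
def rootGp {F : Type*} [Field F] (Γ : Subgroup (GL (Fin 2) F)) : AddSubgroup F where
  carrier := {a | ur a ∈ Γ}
  add_mem' {a b} ha hb := by
    simp only [Set.mem_ofPred_eq, ur_add] at *; exact mul_mem ha hb
  zero_mem' := by simp only [Set.mem_ofPred_eq, ur_zero]; exact one_mem _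
  neg_mem' {a} ha := by
    simp only [Set.mem_ofPred_eq, ur_neg] at *; exact inv_mem ha

theorem mem_rootGp {F : Type*} [Field F] {Γ : Subgroup (GL (Fin 2) F)} {a : F} :
    a ∈ rootGp Γ ↔ ur a ∈ Γ := Iff.rfl

theorem ur_smul_infty {F : Type*} [Field F] [DecidableEq F] (a : F) :
    ur a • (∞ : OnePoint F) = ∞ := by
  rw [smul_infty_eq_self_iff]; rfl

theorem ur_smul_coe {F : Type*} [Field F] [DecidableEq F] (a x : F) :
    ur a • (x : OnePoint F) = ((x + a : F) : OnePoint F) := by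
  rw [smul_some_eq_ite]; simp [ur_val]

theorem smul_coe_eq_self_iff {F : Type*} [Field F] [DecidableEq F] (g : GL (Fin 2) F) (x : F) :
    g • (x : OnePoint F) = x ↔ g.val 1 0 * x ^ 2 + (g.val 1 1 - g.val 0 0) * x - g.val 0 1 = 0 := by
  rw [← fixpointPolynomial_aeval_eq_zero_iff]
  simp [fixpointPolynomial]

theorem card_fixedBy_par {F : Type*} [Field F] [DecidableEq F] (h2 : (2 : F) ≠ 0)
    {g : GL (Fin 2) F} (hg : g.IsParabolic) : Nat.card (fixedBy (OnePoint F) g) = 1 := by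
  have : NeZero (2 : F) := ⟨h2⟩
  rw [Nat.card_eq_one_iff_unique]
  constructor
  · constructor
    rintro ⟨x, hx⟩ ⟨y, hy⟩
    rw [mem_fixedBy, hg.smul_eq_self_iff] at hx hy
    exact Subtype.ext (hx.trans hy.symm)
  · exact ⟨⟨parabolicFixedPoint g, by rw [mem_fixedBy, hg.smul_eq_self_iff]⟩⟩

/-- An element whose discriminant is a nonzero square is diagonalizable, so it has exactly two fixed
points on the projective line. -/
theorem card_fixedBy_two {F : Type*} [Field F] [DecidableEq F] (h2 : (2 : F) ≠ 0)
    {g : GL (Fin 2) F} (hd : g.val.discr ≠ 0) (hsq : IsSquare g.val.discr) :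
    Nat.card (fixedBy (OnePoint F) g) = 2 := by
  obtain ⟨s, hs⟩ := hsq
  have hs0 : s ≠ 0 := by rintro rfl; simp at hs; exact hd hs
  rw [discr_fin_two, trace_fin_two, det_fin_two] at hs
  obtain ⟨a, ha⟩ : ∃ a, a = g.val 0 0 := ⟨_, rfl⟩
  obtain ⟨b, hb⟩ : ∃ b, b = g.val 0 1 := ⟨_, rfl⟩
  obtain ⟨c, hc⟩ : ∃ c, c = g.val 1 0 := ⟨_, rfl⟩
  obtain ⟨d, hd⟩ : ∃ d, d = g.val 1 1 := ⟨_, rfl⟩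
  rw [← ha, ← hb, ← hc, ← hd] at hs
  rw [Nat.card_coe_set_eq]
  by_cases hc0 : c = 0
  · subst hc0
    have had : d - a ≠ 0 := by
      intro h
      apply hs0
      have : s * s = 0 := by rw [← hs, ← sub_eq_zero.1 h]; ring
      simpa using this
    have : fixedBy (OnePoint F) g = {∞, ((b / (d - a) : F) : OnePoint F)} := by
      ext x
      cases x with
      | infty => simp [smul_infty_eq_self_iff, ← hc]
      | coe x =>
        rw [mem_fixedBy, smul_coe_eq_self_iff, ← ha, ← hb, ← hc, ← hd]
        simp only [Set.mem_insert_iff, Set.mem_singleton_iff, coe_ne_infty, false_or, coe_eq_coe]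
        rw [eq_div_iff had]
        constructor <;> intro h <;> linear_combination h
    rw [this, Set.ncard_pair (infty_ne_coe _)]
  · have : fixedBy (OnePoint F) g = {(((a - d + s) / (2 * c) : F) : OnePoint F),
        (((a - d - s) / (2 * c) : F) : OnePoint F)} := by
      ext x
      cases x with
      | infty => simp [smul_infty_eq_self_iff, ← hc, hc0]
      | coe x =>
        rw [mem_fixedBy, smul_coe_eq_self_iff, ← ha, ← hb, ← hc, ← hd]
        simp only [Set.mem_insert_iff, Set.mem_singleton_iff, coe_eq_coe]
        have h2c : 2 * c ≠ 0 := mul_ne_zero h2 hc0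
        rw [eq_div_iff h2c, eq_div_iff h2c, ← sub_eq_zero (a := x * (2 * c)) (b := a - d + s),
          ← sub_eq_zero (a := x * (2 * c)) (b := a - d - s), ← mul_eq_zero]
        have e : (x * (2 * c) - (a - d + s)) * (x * (2 * c) - (a - d - s)) =
            4 * c * (c * x ^ 2 + (d - a) * x - b) := by
          linear_combination hs
        rw [e]
        have : 4 * c ≠ 0 := by
          rw [show (4 : F) = 2 * 2 by norm_num]; exact mul_ne_zero (mul_ne_zero h2 h2) hc0
        simp [this]
    rw [this, Set.ncard_pair]
    intro h
    rw [coe_eq_coe, div_left_inj' (mul_ne_zero h2 hc0)] at h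
    have : 2 * s = 0 := by linear_combination h
    exact hs0 (by simpa [h2] using this)

/-- A noncentral `g` of trace `± 2` has the same fixed points as `g ^ 2`, and `g ^ 2` has order
dividing the characteristic. -/
theorem par_sq {F : Type*} [Field F] {p : ℕ} [CharP F p] (hp : p.Prime)
    (h2 : (2 : F) ≠ 0) {g : GL (Fin 2) F} (hdet : g.val.det = 1) (hg : g.IsParabolic) :
    (g ^ 2).IsParabolic ∧ (g ^ 2) ^ p = 1 := by
  obtain ⟨hns, hd⟩ := hg
  rw [discr_fin_two, hdet] at hd
  have hch : (g ^ 2).val = g.val.trace • g.val - 1 := by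
    have h := det_fin_two g.val
    rw [hdet] at h
    rw [Units.val_pow_eq_pow_val, sq, trace_fin_two]
    ext i j
    fin_cases i <;> fin_cases j <;> simp [Matrix.mul_apply, Fin.sum_univ_two] <;> grind
  have ht : g.val.trace ≠ 0 := by
    intro h
    rw [h] at hd
    have : (2 : F) * 2 = 0 := by linear_combination -hd
    simp [h2] at this
  have hdet2 : (g ^ 2).val.det = 1 := by simp [hdet]
  have htr2 : (g ^ 2).val.trace = 2 := by
    rw [hch, trace_sub, trace_smul, trace_one, smul_eq_mul]
    simp only [Fintype.card_fin, Nat.cast_ofNat]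
    linear_combination hd
  refine ⟨⟨?_, ?_⟩, ?_⟩
  · rintro ⟨s, hs⟩
    apply hns
    refine ⟨(s + 1) / g.val.trace, ?_⟩
    have h3 : g.val.trace • g.val = Matrix.scalar (Fin 2) s + 1 := by rw [hs, hch]; simp
    have h4 : g.val = (g.val.trace)⁻¹ • (Matrix.scalar (Fin 2) s + 1) := by
      rw [← h3, smul_smul, inv_mul_cancel₀ ht, one_smul]
    refine Eq.trans ?_ h4.symm
    ext i j
    fin_cases i <;> fin_cases j <;> simp [div_eq_inv_mul]
  · rw [discr_fin_two, hdet2, htr2]; norm_num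
  · have : Fact p.Prime := ⟨hp⟩
    have hN : ((g ^ 2).val - 1) ^ 2 = 0 := by
      have h := det_fin_two (g ^ 2).val
      rw [hdet2] at h
      have htr := trace_fin_two (g ^ 2).val
      rw [htr2] at htr
      generalize (g ^ 2).val = M at *
      rw [sq]
      ext i j
      fin_cases i <;> fin_cases j <;> simp [Matrix.mul_apply, Fin.sum_univ_two] <;> grind
    have hcp : CharP (Matrix (Fin 2) (Fin 2) F) p := inferInstance
    have h5 : (g ^ 2).val ^ p = 1 := by
      have h6 : (g ^ 2).val = 1 + ((g ^ 2).val - 1) := by abel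
      rw [h6, add_pow_char_of_commute p (Commute.one_left _), one_pow]
      obtain ⟨r, hr⟩ : ∃ r, p = 2 + r := ⟨p - 2, by have := hp.two_le; omega⟩
      have : ((g ^ 2).val - 1) ^ p = 0 := by rw [hr, pow_add, hN, zero_mul]
      rw [this, add_zero]
    ext1
    simpa using h5

/-- A noncentral element of trace `± 2` fixes only points of the orbit of `∞`. Counting modulo `p`
the fixed points of `ur a` shows that this orbit has size `1` modulo `p`; if it missed the fixed
point of `g`, counting those of `g ^ 2` would give size `0` modulo `p`. -/
theorem par_fixed_mem_orbit {F : Type*} [Field F] [DecidableEq F] [Finite F] {p : ℕ} [CharP F p]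
    (hp : p.Prime) (h2 : (2 : F) ≠ 0) (Γ : Subgroup (GL (Fin 2) F))
    (hdet : ∀ g ∈ Γ, g.val.det = 1) (hA : ∃ a ∈ rootGp Γ, a ≠ 0)
    (g : GL (Fin 2) F) (hgΓ : g ∈ Γ) (hg : g.IsParabolic) (x : OnePoint F) (hx : g • x = x) :
    x ∈ orbit Γ (∞ : OnePoint F) := by
  have hpf : Fact p.Prime := ⟨hp⟩
  have n2 : NeZero (2 : F) := ⟨h2⟩
  have hfin : Finite (OnePoint F) := inferInstanceAs (Finite (Option F))
  have key : ∀ (h : GL (Fin 2) F) (hh : h ∈ Γ), h.IsParabolic → h ^ p = 1 →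
      Nat.card (orbit Γ (∞ : OnePoint F)) ≡
        Nat.card {y : orbit Γ (∞ : OnePoint F) // h • (y : OnePoint F) = y} [MOD p] := by
    intro h hh hpar hpow
    let h' : Γ := ⟨h, hh⟩
    have hP : IsPGroup p (Subgroup.zpowers h') := by
      rintro ⟨_, i, rfl⟩
      refine ⟨1, Subtype.ext (Subtype.ext ?_)⟩
      simp only [pow_one]
      change (h ^ i) ^ p = 1
      rw [← zpow_natCast, ← _root_.zpow_mul, mul_comm, _root_.zpow_mul, zpow_natCast, hpow, _root_.one_zpow]
    have := hP.card_modEq_card_fixedPoints (orbit Γ (∞ : OnePoint F))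
    convert this using 1
    refine Nat.card_congr (Equiv.subtypeEquivRight fun y => ?_)
    constructor
    · rintro hy ⟨_, i, rfl⟩
      have h1 : h' • y = y := Subtype.ext hy
      have : h' ∈ stabilizer Γ y := h1
      exact zpow_mem this i
    · intro hy
      have := hy ⟨h', Subgroup.mem_zpowers h'⟩
      exact congrArg Subtype.val this
  obtain ⟨a, ha, ha0⟩ := hA
  have hua : (ur a).IsParabolic := by
    rw [Matrix.GeneralLinearGroup.isParabolic_iff_of_upperTriangular (by rfl)]
    exact ⟨rfl, ha0⟩
  have k1 := key (ur a) ha hua (by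
    have : ∀ n : ℕ, ur a ^ n = ur (n * a) := by
      intro n
      induction n with
      | zero => simp [ur_zero]
      | succ n ih => rw [pow_succ, ih, ← ur_add]; congr 1; push_cast; ring
    rw [this, CharP.cast_eq_zero, zero_mul, ur_zero])
  obtain ⟨hg2, hg2p⟩ := par_sq hp h2 (hdet g hgΓ) hg
  have k2 := key (g ^ 2) (pow_mem hgΓ 2) hg2 hg2p
  by_contra hxo
  have c1 : Nat.card {y : orbit Γ (∞ : OnePoint F) // ur a • (y : OnePoint F) = y} = 1 := by
    rw [Nat.card_eq_one_iff_unique]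
    constructor
    · constructor
      rintro ⟨y, hy⟩ ⟨z, hz⟩
      rw [hua.smul_eq_self_iff] at hy hz
      exact Subtype.ext (Subtype.ext (hy.trans hz.symm))
    · exact ⟨⟨⟨∞, mem_orbit_self _⟩, ur_smul_infty a⟩⟩
  have c2 : Nat.card {y : orbit Γ (∞ : OnePoint F) // g ^ 2 • (y : OnePoint F) = y} = 0 := by
    rw [Nat.card_eq_zero]
    left
    constructor
    rintro ⟨⟨y, hyo⟩, hy⟩
    apply hxo
    have hx2 : g ^ 2 • x = x := by rw [sq, mul_smul, hx, hx]
    rw [hg2.smul_eq_self_iff] at hy hx2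
    rw [hx2, ← hy]
    exact hyo
  rw [c1] at k1
  rw [c2] at k2
  have := k1.symm.trans k2
  rw [Nat.modEq_zero_iff_dvd] at this
  exact hp.one_lt.not_ge (Nat.le_of_dvd one_pos this)

end Dickson

/-! ### Dickson's count for subgroups of `SL₂` -/

section DicksonD

open Matrix Matrix.GeneralLinearGroup OnePoint MulAction
open scoped Pointwise

/-- The subgroup of `Γ` acting trivially on the projective line. -/
def triv {F : Type*} [Field F] [DecidableEq F] (Γ : Subgroup (GL (Fin 2) F)) : Subgroup Γ :=
  (MulAction.toPermHom Γ (OnePoint F)).ker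

theorem mem_triv {F : Type*} [Field F] [DecidableEq F] {Γ : Subgroup (GL (Fin 2) F)} {g : Γ} :
    g ∈ triv Γ ↔ (g : GL (Fin 2) F).val 1 0 = 0 ∧ (g : GL (Fin 2) F).val 0 1 = 0 ∧
      (g : GL (Fin 2) F).val 0 0 = (g : GL (Fin 2) F).val 1 1 := by
  have h0 : g ∈ triv Γ ↔ ∀ x : OnePoint F, (g : GL (Fin 2) F) • x = x := by
    rw [triv, MonoidHom.mem_ker, Equiv.ext_iff]
    rfl
  rw [h0]
  constructor
  · intro h
    have h1 := smul_infty_eq_self_iff.1 (h ∞)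
    have h2 := (smul_coe_eq_self_iff _ _).1 (h ((0 : F) : OnePoint F))
    have h3 := (smul_coe_eq_self_iff _ _).1 (h ((1 : F) : OnePoint F))
    rw [h1] at h2 h3
    have h4 : (g : GL (Fin 2) F).val 0 1 = 0 := by linear_combination -h2
    refine ⟨h1, h4, ?_⟩
    rw [h4] at h3
    linear_combination -h3
  · rintro ⟨h1, h2, h3⟩ x
    cases x with
    | infty => exact smul_infty_eq_self_iff.2 h1
    | coe x => rw [smul_coe_eq_self_iff, h1, h2, h3]; ring

/-- Elements of `Γ` fixing `∞` whose diagonal entries are `± 1` are products of a scalar and an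
upper unipotent element of `Γ`. -/
theorem exists_triv_mul_ur {F : Type*} [Field F] [DecidableEq F] {p : ℕ} [CharP F p]
    (hp : p.Prime) (hp2 : p ≠ 2) (Γ : Subgroup (GL (Fin 2) F))
    (hdet : ∀ g ∈ Γ, g.val.det = 1) (g : Γ) (h10 : (g : GL (Fin 2) F).val 1 0 = 0)
    (h00 : (g : GL (Fin 2) F).val 0 0 ^ 2 = 1) :
    ∃ z ∈ triv Γ, ∃ a, ∃ ha : a ∈ rootGp Γ, g = z * ⟨ur a, ha⟩ ∧
      (a = 0 → (g : GL (Fin 2) F).val 0 1 = 0) := by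
  obtain ⟨g, hg⟩ := g
  simp only at *
  have hd := hdet g hg
  rw [det_fin_two, h10] at hd
  rcases mul_self_eq_one_iff.1 ((sq _).symm.trans h00) with h | h
  · have h11 : g.val 1 1 = 1 := by rw [h] at hd; linear_combination hd
    have e : g = ur (g.val 0 1) := by
      ext i j; fin_cases i <;> fin_cases j <;> simp [ur_val, h, h10, h11]
    exact ⟨1, one_mem _, g.val 0 1, by rw [mem_rootGp, ← e]; exact hg,
      Subtype.ext (by rw [one_mul]; exact e), id⟩
  · have h11 : g.val 1 1 = -1 := by rw [h] at hd; linear_combination -hd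
    have e : g = (-1) * ur (-g.val 0 1) := by
      ext i j; fin_cases i <;> fin_cases j <;> simp [ur_val, h, h10, h11]
    have hm : (-1 : GL (Fin 2) F) ∈ Γ := by
      have : g ^ p = -1 := by
        rw [e, neg_one_mul, Odd.neg_pow (hp.odd_of_ne_two hp2)]
        have : ∀ (a : F) (n : ℕ), ur a ^ n = ur (n * a) := by
          intro a n
          induction n with
          | zero => simp [ur_zero]
          | succ n ih => rw [pow_succ, ih, ← ur_add]; congr 1; push_cast; ring
        rw [this, CharP.cast_eq_zero, zero_mul, ur_zero]
      rw [← this]; exact pow_mem hg p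
    have hu : ur (-g.val 0 1) ∈ Γ := by
      have : ur (-g.val 0 1) = (-1) * g := by
        conv_rhs => rw [e]
        simp
      rw [this]; exact mul_mem hm hg
    refine ⟨⟨-1, hm⟩, ?_, -g.val 0 1, hu, Subtype.ext e, by simp⟩
    rw [mem_triv]; simp

theorem triv_mul_ur_inj {F : Type*} [Field F] [DecidableEq F] (Γ : Subgroup (GL (Fin 2) F))
    {z z' : Γ} (hz : z ∈ triv Γ) (hz' : z' ∈ triv Γ) {a a' : F} (ha : a ∈ rootGp Γ)
    (ha' : a' ∈ rootGp Γ) (h : z * ⟨ur a, ha⟩ = z' * ⟨ur a', ha'⟩) : z = z' ∧ a = a' := by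
  have e : z = z' * (⟨ur (a' - a), sub_mem ha' ha⟩ : Γ) := by
    have : (⟨ur (a' - a), sub_mem ha' ha⟩ : Γ) = ⟨ur a', ha'⟩ * (⟨ur a, ha⟩ : Γ)⁻¹ :=
      Subtype.ext (by simp [sub_eq_add_neg, ur_add, ur_neg])
    rw [this, ← mul_assoc, ← h, mul_inv_cancel_right]
  have h2 : (⟨ur (a' - a), sub_mem ha' ha⟩ : Γ) ∈ triv Γ := by
    have : (⟨ur (a' - a), sub_mem ha' ha⟩ : Γ) = z'⁻¹ * z := by rw [e]; group
    rw [this]; exact mul_mem (inv_mem hz') hz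
  have h3 : a' - a = 0 := by simpa [ur_val] using (mem_triv.1 h2).2.1
  have h4 : a' = a := sub_eq_zero.1 h3
  subst h4
  exact ⟨mul_right_cancel h, rfl⟩

/-- A parabolic element has a unique fixed point, which lies in the orbit of `∞`. Those fixing `∞`
are the products `z * ur a` with `z` acting trivially and `a ≠ 0`, and all points of the orbit
have conjugate stabilizers. -/
theorem card_par {F : Type*} [Field F] [DecidableEq F] [Finite F] {p : ℕ} [CharP F p]
    (hp : p.Prime) (h2 : (2 : F) ≠ 0) (hp2 : p ≠ 2) (Γ : Subgroup (GL (Fin 2) F))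
    (hdet : ∀ g ∈ Γ, g.val.det = 1) (hA : ∃ a ∈ rootGp Γ, a ≠ 0) :
    Nat.card {g : Γ | (g : GL (Fin 2) F).IsParabolic} =
      Nat.card (triv Γ) * (Nat.card (orbit Γ (∞ : OnePoint F)) * (Nat.card (rootGp Γ) - 1)) := by
  have n2 : NeZero (2 : F) := ⟨h2⟩
  have hpu : ∀ (z : Γ), z ∈ triv Γ → ∀ a : F, ∀ ha : a ∈ rootGp Γ, a ≠ 0 →
      ((z * ⟨ur a, ha⟩ : Γ) : GL (Fin 2) F).IsParabolic ∧
      (z * ⟨ur a, ha⟩ : Γ) • (∞ : OnePoint F) = ∞ := by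
    intro z hz a ha ha0
    obtain ⟨z1, z2, z3⟩ := mem_triv.1 hz
    have hd := hdet _ z.2
    rw [det_fin_two, z1, z2, ← z3] at hd
    have h10 : ((z * ⟨ur a, ha⟩ : Γ) : GL (Fin 2) F).val 1 0 = 0 := by
      simp [Matrix.mul_apply, Fin.sum_univ_two, ur_val, z1]
    have z0 : (z : GL (Fin 2) F).val 0 0 ≠ 0 := by
      intro h; rw [h] at hd; simp at hd
    refine ⟨?_, smul_infty_eq_self_iff.2 h10⟩
    rw [Matrix.GeneralLinearGroup.isParabolic_iff_of_upperTriangular h10]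
    constructor
    · simp [Matrix.mul_apply, Fin.sum_univ_two, ur_val, z1, z2, z3]
    · simp [Matrix.mul_apply, Fin.sum_univ_two, ur_val, z2, z0, ha0]
  choose r hr using fun v : orbit Γ (∞ : OnePoint F) => v.2
  simp only at hr
  let f : triv Γ × orbit Γ (∞ : OnePoint F) × {a : rootGp Γ // a ≠ 0} →
      {g : Γ | (g : GL (Fin 2) F).IsParabolic} := fun x =>
    ⟨r x.2.1 * (x.1 * ⟨ur x.2.2.1.1, x.2.2.1.2⟩) * (r x.2.1)⁻¹, by
      have := (hpu x.1.1 x.1.2 x.2.2.1.1 x.2.2.1.2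
        (fun h => x.2.2.2 (Subtype.ext h))).1
      rw [Set.mem_ofPred_eq, Subgroup.coe_mul, Subgroup.coe_mul, Subgroup.coe_inv]
      exact (Matrix.GeneralLinearGroup.isParabolic_conj_iff _ _).2 this⟩
  have hf : Function.Bijective f := by
    constructor
    · rintro ⟨⟨z, hz⟩, v, ⟨⟨a, ha⟩, ha0⟩⟩ ⟨⟨z', hz'⟩, v', ⟨⟨a', ha'⟩, ha0'⟩⟩ h
      have fixv : ∀ x, (f x).1 • x.2.1.1 = x.2.1.1 := by
        intro x
        have h1 := (hpu x.1.1 x.1.2 x.2.2.1.1 x.2.2.1.2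
          (fun h => x.2.2.2 (Subtype.ext h))).2
        have h2 := hr x.2.1
        change (r x.2.1 * (x.1 * ⟨ur x.2.2.1.1, x.2.2.1.2⟩) * (r x.2.1)⁻¹) • x.2.1.1 = _
        rw [← h2, mul_smul, inv_smul_smul, mul_smul, h1]
      have e1 := fixv ⟨⟨z, hz⟩, v, ⟨⟨a, ha⟩, ha0⟩⟩
      have e2 := fixv ⟨⟨z', hz'⟩, v', ⟨⟨a', ha'⟩, ha0'⟩⟩
      rw [h] at e1
      generalize hw : f (⟨z', hz'⟩, v', ⟨⟨a', ha'⟩, ha0'⟩) = w at h e1 e2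
      have hwp := w.2
      have e3 := ((show (w.1 : GL (Fin 2) F).IsParabolic from hwp).smul_eq_self_iff).1 e1
      have e4 := ((show (w.1 : GL (Fin 2) F).IsParabolic from hwp).smul_eq_self_iff).1 e2
      have e5 : v = v' := Subtype.ext (e3.trans e4.symm)
      subst e5
      have h6 := congrArg Subtype.val (h.trans hw.symm)
      have h7 := mul_left_cancel (mul_right_cancel h6)
      obtain ⟨h8, h9⟩ := triv_mul_ur_inj Γ hz hz' ha ha' h7
      subst h8; subst h9; rfl
    · rintro ⟨g, hg⟩
      have hg' : (g : GL (Fin 2) F).IsParabolic := hg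
      have hfix : (g : GL (Fin 2) F) • parabolicFixedPoint (g : GL (Fin 2) F) =
        parabolicFixedPoint (g : GL (Fin 2) F) := hg'.smul_eq_self_iff.2 rfl
      have ho := par_fixed_mem_orbit hp h2 Γ hdet hA g g.2 hg' _ hfix
      obtain ⟨v, hv⟩ : ∃ v : orbit Γ (∞ : OnePoint F), v = ⟨_, ho⟩ := ⟨_, rfl⟩
      have hgv : g • v.1 = v.1 := by rw [hv]; exact hfix
      obtain ⟨g0, hg0⟩ : ∃ g0 : Γ, g0 = (r v)⁻¹ * g * r v := ⟨_, rfl⟩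
      have hp0 : (g0 : GL (Fin 2) F).IsParabolic := by
        rw [hg0, Subgroup.coe_mul, Subgroup.coe_mul, Subgroup.coe_inv]
        exact (Matrix.GeneralLinearGroup.isParabolic_conj_iff' _ _).2 hg'
      have h0 : g0 • (∞ : OnePoint F) = ∞ := by
        rw [hg0, mul_smul, mul_smul, hr v, hgv, inv_smul_eq_iff, hr v]
      have h10 : (g0 : GL (Fin 2) F).val 1 0 = 0 := smul_infty_eq_self_iff.1 h0
      obtain ⟨h5, h6⟩ :=
        (Matrix.GeneralLinearGroup.isParabolic_iff_of_upperTriangular h10).1 hp0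
      have hd := hdet _ g0.2
      rw [det_fin_two, h10, ← h5] at hd
      obtain ⟨z, hz, a, ha, e, ha0⟩ := exists_triv_mul_ur hp hp2 Γ hdet g0 h10
        (by linear_combination hd)
      refine ⟨⟨⟨z, hz⟩, v, ⟨⟨a, ha⟩, fun h => h6 (ha0 (congrArg Subtype.val h))⟩⟩,
        Subtype.ext ?_⟩
      change r v * (z * ⟨ur a, ha⟩) * (r v)⁻¹ = g
      rw [← e, hg0]; group
  rw [← Nat.card_congr (Equiv.ofBijective f hf), Nat.card_prod, Nat.card_prod]
  congr 2
  have : Nat.card {a : rootGp Γ // a ≠ 0} = ({0}ᶜ : Set (rootGp Γ)).ncard := rfl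
  rw [this, Set.ncard_compl, Set.ncard_singleton]

/-- The number `d` is the order of the group of squares `g₀₀ ^ 2` for `g` in the stabilizer of `∞`.
This group acts freely on the nonzero elements of the root group, whence `d ≤ q - 1`. -/
theorem card_stab {F : Type*} [Field F] [DecidableEq F] [Finite F] {p : ℕ} [CharP F p]
    (hp : p.Prime) (hp2 : p ≠ 2) (Γ : Subgroup (GL (Fin 2) F))
    (hdet : ∀ g ∈ Γ, g.val.det = 1) (hA : ∃ a ∈ rootGp Γ, a ≠ 0) :
    ∃ d, 1 ≤ d ∧ d ≤ Nat.card (rootGp Γ) - 1 ∧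
      Nat.card (stabilizer Γ (∞ : OnePoint F)) = Nat.card (triv Γ) * (Nat.card (rootGp Γ) * d) := by
  have hS : ∀ g : stabilizer Γ (∞ : OnePoint F), (g.1 : GL (Fin 2) F).val 1 0 = 0 :=
    fun g => smul_infty_eq_self_iff.1 g.2
  let f : stabilizer Γ (∞ : OnePoint F) →* F :=
    { toFun := fun g => (g.1 : GL (Fin 2) F).val 0 0 ^ 2
      map_one' := by simp
      map_mul' := fun g h => by
        simp only [Subgroup.coe_mul, Units.val_mul, Matrix.mul_apply, Fin.sum_univ_two, hS h]
        ring }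
  let χ := f.toHomUnits
  have hχ : ∀ g, ((χ g : Fˣ) : F) = (g.1 : GL (Fin 2) F).val 0 0 ^ 2 := fun g => rfl
  refine ⟨Nat.card χ.range, Nat.card_pos, ?_, ?_⟩
  · obtain ⟨a0, ha0, hne⟩ := hA
    have key : ∀ u : χ.range, (u.1 : F) * a0 ∈ rootGp Γ := by
      rintro ⟨_, g, rfl⟩
      rw [hχ]
      have hg := hS g
      have hd := hdet _ g.1.2
      rw [det_fin_two, hg] at hd
      have : (g.1 : GL (Fin 2) F) * ur a0 * (g.1 : GL (Fin 2) F)⁻¹ =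
          ur ((g.1 : GL (Fin 2) F).val 0 0 ^ 2 * a0) := by
        rw [mul_inv_eq_iff_eq_mul]
        generalize (g.1 : GL (Fin 2) F) = M at *
        ext i j
        fin_cases i <;> fin_cases j <;>
          simp [Matrix.mul_apply, Fin.sum_univ_two, ur_val, hg]
        linear_combination (-M.val 0 0 * a0) * hd
      rw [mem_rootGp, ← this]
      exact mul_mem (mul_mem g.1.2 ha0) (inv_mem g.1.2)
    have : Nat.card (rootGp Γ) - 1 = Nat.card {a : rootGp Γ // a ≠ 0} := by
      have : Nat.card {a : rootGp Γ // a ≠ 0} = ({0}ᶜ : Set (rootGp Γ)).ncard := rfl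
      rw [this, Set.ncard_compl, Set.ncard_singleton]
    rw [this]
    refine Nat.card_le_card_of_injective (fun u => ⟨⟨_, key u⟩, ?_⟩) ?_
    · intro h
      have := congrArg Subtype.val h
      simp [hne] at this
    · intro u v h
      have := congrArg (fun x => x.1.1) h
      simp only at this
      exact Subtype.ext (Units.ext (mul_right_cancel₀ hne this))
  · rw [← Subgroup.card_mul_index χ.ker, Subgroup.index_ker, ← mul_assoc,
      ← Nat.card_prod (triv Γ) (rootGp Γ)]
    congr 1
    have hmem : ∀ z : triv Γ, ∀ a : rootGp Γ,
        ((z : Γ) * ⟨ur a.1, a.2⟩) ∈ stabilizer Γ (∞ : OnePoint F) := by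
      intro z a
      refine mul_mem ?_ (ur_smul_infty a.1)
      exact smul_infty_eq_self_iff.2 (mem_triv.1 z.2).1
    symm
    refine Nat.card_congr (Equiv.ofBijective (fun x => ⟨⟨_, hmem x.1 x.2⟩, ?_⟩) ⟨?_, ?_⟩)
    · rw [MonoidHom.mem_ker, Units.ext_iff, hχ]
      obtain ⟨z1, z2, z3⟩ := mem_triv.1 x.1.2
      have hd := hdet _ x.1.1.2
      rw [det_fin_two, z1, z2, ← z3] at hd
      simp [Matrix.mul_apply, Fin.sum_univ_two, ur_val, z2]
      exact mul_self_eq_one_iff.1 (by linear_combination hd)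
    · rintro ⟨⟨z, hz⟩, ⟨a, ha⟩⟩ ⟨⟨z', hz'⟩, ⟨a', ha'⟩⟩ h
      have h7 := congrArg (fun x => x.1.1) h
      obtain ⟨h8, h9⟩ := triv_mul_ur_inj Γ hz hz' ha ha' h7
      subst h8; subst h9; rfl
    · rintro ⟨g, hg⟩
      rw [MonoidHom.mem_ker, Units.ext_iff, hχ] at hg
      obtain ⟨z, hz, a, ha, e, -⟩ := exists_triv_mul_ur hp hp2 Γ hdet g.1 (hS g) hg
      exact ⟨⟨⟨z, hz⟩, ⟨a, ha⟩⟩, Subtype.ext (Subtype.ext e.symm)⟩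

/-- If all elements of `Γ` have square discriminant and `0` lies in the orbit of `∞`, then the
finite part of this orbit is the root group at `∞`. -/
theorem orbit_subset_rootGp {F : Type*} [Field F] [DecidableEq F] [Finite F] {p : ℕ} [CharP F p]
    (hp : p.Prime) (hp5 : 5 ≤ p) (Γ : Subgroup (GL (Fin 2) F))
    (hdet : ∀ g ∈ Γ, g.val.det = 1) (hsq : ∀ g ∈ Γ, IsSquare g.val.discr)
    (hA : ∃ a ∈ rootGp Γ, a ≠ 0) (h0 : ((0 : F) : OnePoint F) ∈ orbit Γ (∞ : OnePoint F))
    (x : F) (hx : (x : OnePoint F) ∈ orbit Γ (∞ : OnePoint F)) : x ∈ rootGp Γ := by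
  have hfin : Finite (OnePoint F) := inferInstanceAs (Finite (Option F))
  have h2 : (2 : F) ≠ 0 := by
    intro h
    have : ((2 : ℕ) : F) = 0 := by exact_mod_cast h
    rw [CharP.cast_eq_zero_iff F p] at this
    exact absurd (Nat.le_of_dvd (by norm_num) this) (by omega)
  let T : Set F := {x | (x : OnePoint F) ∈ orbit Γ (∞ : OnePoint F)}
  have hTA : ∀ t ∈ T, ∀ a ∈ rootGp Γ, t + a ∈ T := by
    intro t ht a ha
    have : (⟨ur a, ha⟩ : Γ) • (t : OnePoint F) = ((t + a : F) : OnePoint F) := ur_smul_coe a t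
    change ((t + a : F) : OnePoint F) ∈ orbit Γ (∞ : OnePoint F)
    rw [← this]
    exact mem_orbit_of_mem_orbit _ ht
  have hq : 5 ≤ Nat.card (rootGp Γ) := by
    obtain ⟨a, ha, ha0⟩ := hA
    have : addOrderOf (⟨a, ha⟩ : rootGp Γ) = p := by
      have : Fact p.Prime := ⟨hp⟩
      apply addOrderOf_eq_prime
      · ext; simp
      · simpa using ha0
    have h3 := addOrderOf_dvd_natCard (⟨a, ha⟩ : rootGp Γ)
    rw [this] at h3
    exact hp5.trans (Nat.le_of_dvd Nat.card_pos h3)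
  have hT : T + (rootGp Γ : Set F) = T := by
    apply Set.Subset.antisymm
    · rintro _ ⟨t, ht, a, ha, rfl⟩
      exact hTA t ht a ha
    · intro t ht
      exact ⟨t, ht, 0, zero_mem _, add_zero t⟩
  obtain ⟨k, hk⟩ : ∃ k, Nat.card T = Nat.card (rootGp Γ) * k := by
    have := AddSubgroup.card_add_eq_card_addSubgroup_add_card_quotient (rootGp Γ) T
    rw [hT] at this
    exact ⟨_, this⟩
  have hAT : (rootGp Γ : Set F) ⊆ T := by
    intro a ha
    have := hTA 0 h0 a ha
    rwa [zero_add] at this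
  have hN : Nat.card (orbit Γ (∞ : OnePoint F)) = 1 + Nat.card T := by
    have : orbit Γ (∞ : OnePoint F) = insert ∞ ((fun x : F => (x : OnePoint F)) '' T) := by
      ext y
      cases y with
      | infty => simp [mem_orbit_self]
      | coe y => simp [T]
    rw [this, Nat.card_coe_set_eq, Set.ncard_insert_of_notMem (by simp),
      Set.ncard_image_of_injective _ OnePoint.coe_injective, Nat.card_coe_set_eq, add_comm]
  have hk1 : 1 ≤ k := by
    by_contra h
    have : k = 0 := by omega
    rw [this, mul_zero] at hk
    have : Nonempty T := ⟨⟨0, h0⟩⟩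
    exact Nat.card_pos.ne' hk
  obtain ⟨d, hd1, hd2, hst⟩ := card_stab hp (by omega) Γ hdet hA
  have hk' : k = 1 := by
    refine dickson_count (X := OnePoint F) (triv Γ) ?_ {g : Γ | (g : GL (Fin 2) F).IsParabolic}
      ?_ ?_ ?_ ∞ hq hk1 hd1 hd2 (by rw [hN, hk, mul_comm]) hst
      (card_par hp h2 (by omega) Γ hdet hA)
    · intro g hg y
      have := MonoidHom.mem_ker.1 hg
      exact Equiv.ext_iff.1 this y
    · rw [Set.disjoint_left]
      intro g hg hg2
      obtain ⟨z1, z2, z3⟩ := mem_triv.1 hg2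
      exact ((Matrix.GeneralLinearGroup.isParabolic_iff_of_upperTriangular z1).1 hg).2 z2
    · intro g hg
      exact card_fixedBy_par h2 hg
    · intro g hg hgz
      have hns : (g : GL (Fin 2) F).val.discr ≠ 0 := by
        intro hdisc
        apply hg
        refine ⟨?_, hdisc⟩
        rintro ⟨s, hs⟩
        apply hgz
        rw [mem_triv, ← hs]
        simp
      exact card_fixedBy_two h2 hns (hsq g g.2)
  have hle : T.ncard ≤ (rootGp Γ : Set F).ncard := by
    have e1 : T.ncard = Nat.card T := rfl
    have e2 : (rootGp Γ : Set F).ncard = Nat.card (rootGp Γ) := rfl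
    rw [e1, e2, hk, hk', mul_one]
  have := Set.eq_of_subset_of_ncard_le hAT hle
  have hxT : x ∈ T := hx
  rw [← this] at hxT
  exact hxT

end DicksonD

/-! ### Opposite root groups in `SL₂` -/

section DicksonE

open Matrix Matrix.GeneralLinearGroup OnePoint MulAction

/-- The Weyl element `(0 -1; 1 0)`. -/
def weyl (F : Type*) [Field F] : GL (Fin 2) F :=
  ⟨!![0, -1; 1, 0], !![0, 1; -1, 0], by simp [one_fin_two], by simp [one_fin_two]⟩

theorem weyl_conj_ur {F : Type*} [Field F] (x : F) : (weyl F)⁻¹ * ur x * weyl F = ll (-x) := by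
  rw [mul_assoc, inv_mul_eq_iff_eq_mul]
  ext i j
  fin_cases i <;> fin_cases j <;>
    simp [Matrix.mul_apply, Fin.sum_univ_two, ur_val, ll_val, weyl]

theorem weyl_conj_ll {F : Type*} [Field F] (x : F) : (weyl F)⁻¹ * ll x * weyl F = ur (-x) := by
  rw [mul_assoc, inv_mul_eq_iff_eq_mul]
  ext i j
  fin_cases i <;> fin_cases j <;>
    simp [Matrix.mul_apply, Fin.sum_univ_two, ur_val, ll_val, weyl]

theorem two_ne_zero_of_char {F : Type*} [Field F] {p : ℕ} [CharP F p] (hp5 : 5 ≤ p) :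
    (2 : F) ≠ 0 := by
  intro h
  have : ((2 : ℕ) : F) = 0 := by exact_mod_cast h
  rw [CharP.cast_eq_zero_iff F p] at this
  exact absurd (Nat.le_of_dvd (by norm_num) this) (by omega)

/-- After conjugation by the Weyl element, `ll (-a)` fixes `0` and carries `∞` to `-a⁻¹`. So both
points lie in the orbit of `∞`, whose finite part is the root group at `∞`. -/
theorem ll_inv_mem_of_isSquare {F : Type*} [Field F] [Finite F] {p : ℕ} [CharP F p]
    (hp : p.Prime) (hp5 : 5 ≤ p) (Γ : Subgroup (GL (Fin 2) F))
    (hdet : ∀ g ∈ Γ, g.val.det = 1) (hsq : ∀ g ∈ Γ, IsSquare g.val.discr)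
    {a b : F} (ha : ur a ∈ Γ) (ha0 : a ≠ 0) (hb : ll b ∈ Γ) (hb0 : b ≠ 0) : ll a⁻¹ ∈ Γ := by
  classical
  have h2 : (2 : F) ≠ 0 := two_ne_zero_of_char hp5
  let Γ' : Subgroup (GL (Fin 2) F) := Γ.comap (MulAut.conj (weyl F)⁻¹).toMonoidHom
  have hmem : ∀ g, g ∈ Γ' ↔ (weyl F)⁻¹ * g * weyl F ∈ Γ := by
    intro g
    rw [Subgroup.mem_comap]
    simp
  have hvd : ∀ g : GL (Fin 2) F, ((weyl F)⁻¹ * g * weyl F).val.det = g.val.det := by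
    intro g
    rw [Units.val_mul, Units.val_mul, det_mul_right_comm, ← Units.val_mul]
    simp
  have hvt : ∀ g : GL (Fin 2) F, ((weyl F)⁻¹ * g * weyl F).val.trace = g.val.trace := by
    intro g
    rw [Units.val_mul, Units.val_mul, trace_mul_cycle, ← Units.val_mul]
    simp
  have hdet' : ∀ g ∈ Γ', g.val.det = 1 := by
    intro g hg
    rw [← hvd]; exact hdet _ ((hmem g).1 hg)
  have hsq' : ∀ g ∈ Γ', IsSquare g.val.discr := by
    intro g hg
    have := hsq _ ((hmem g).1 hg)
    rwa [discr_fin_two, hvd, hvt, ← discr_fin_two] at this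
  have hur : ∀ x, ur x ∈ Γ' ↔ ll (-x) ∈ Γ := fun x => by rw [hmem, weyl_conj_ur]
  have hll : ∀ x, ll x ∈ Γ' ↔ ur (-x) ∈ Γ := fun x => by rw [hmem, weyl_conj_ll]
  have hA : ∃ a ∈ rootGp Γ', a ≠ 0 :=
    ⟨-b, by rw [mem_rootGp, hur, neg_neg]; exact hb, neg_ne_zero.2 hb0⟩
  have hla : ll (-a) ∈ Γ' := by rw [hll, neg_neg]; exact ha
  have h0 : ((0 : F) : OnePoint F) ∈ orbit Γ' (∞ : OnePoint F) := by
    refine par_fixed_mem_orbit hp h2 Γ' hdet' hA (ll (-a)) hla ⟨?_, ?_⟩ _ ?_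
    · rintro ⟨s, hs⟩
      have := congrFun (congrFun hs 1) 0
      simp [ll_val, ha0] at this
    · rw [discr_fin_two]; simp [ll_val, det_fin_two, trace_fin_two]; ring
    · rw [smul_coe_eq_self_iff]; simp [ll_val]
  have hx : (((-a)⁻¹ : F) : OnePoint F) ∈ orbit Γ' (∞ : OnePoint F) := by
    refine ⟨⟨ll (-a), hla⟩, ?_⟩
    change ll (-a) • (∞ : OnePoint F) = _
    rw [smul_infty_eq_ite]
    simp [ll_val, ha0]
  have := orbit_subset_rootGp hp hp5 Γ' hdet' hsq' hA h0 _ hx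
  rw [mem_rootGp, hur] at this
  simpa [inv_neg] using this

/-- The key consequence of Dickson's argument: if a subgroup of `SL₂(K)` contains nontrivial
elements `(1 a; 0 1)` and `(1 0; b 1)`, then it contains `(1 0; a⁻¹ 1)`. The discriminants
become squares over a splitting field of the product of all polynomials `X² - t X + 1`. -/
theorem ll_inv_mem {K : Type*} [Field K] [Finite K] {p : ℕ} [CharP K p]
    (hp : p.Prime) (hp5 : 5 ≤ p) (Γ : Subgroup (GL (Fin 2) K))
    (hdet : ∀ g ∈ Γ, g.val.det = 1)
    {a b : K} (ha : ur a ∈ Γ) (ha0 : a ≠ 0) (hb : ll b ∈ Γ) (hb0 : b ≠ 0) : ll a⁻¹ ∈ Γ := by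
  classical
  have := Fintype.ofFinite K
  let P : Polynomial K :=
    ∏ t : K, (Polynomial.X ^ 2 - Polynomial.C t * Polynomial.X + 1)
  let F := Polynomial.SplittingField P
  have : Finite F := Module.finite_of_finite K
  have : CharP F p := charP_of_injective_algebraMap (algebraMap K F).injective p
  let φ := Matrix.GeneralLinearGroup.map (n := Fin 2) (algebraMap K F)
  have hφ : ∀ g i j, (φ g).val i j = algebraMap K F (g.val i j) := fun g i j => rfl
  have hφu : ∀ x, φ (ur x) = ur (algebraMap K F x) := by
    intro x
    ext i j
    rw [hφ]
    fin_cases i <;> fin_cases j <;> simp [ur_val]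
  have hφl : ∀ x, φ (ll x) = ll (algebraMap K F x) := by
    intro x
    ext i j
    rw [hφ]
    fin_cases i <;> fin_cases j <;> simp [ll_val]
  have hinj : Function.Injective φ := by
    intro g h e
    ext i j
    apply (algebraMap K F).injective
    rw [← hφ, ← hφ, e]
  have hsplit : ∀ t : K, ∃ s : F, s ^ 2 - algebraMap K F t * s + 1 = 0 := by
    intro t
    have h1 : (P.map (algebraMap K F)).Splits := Polynomial.SplittingField.splits P
    have hne : ∀ t : K, (Polynomial.X ^ 2 - Polynomial.C t * Polynomial.X + 1 :
        Polynomial K).natDegree = 2 := by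
      intro t
      compute_degree!
    have hP0 : P.map (algebraMap K F) ≠ 0 := by
      rw [Polynomial.map_ne_zero_iff (algebraMap K F).injective]
      refine Finset.prod_ne_zero_iff.2 fun t _ h => ?_
      have := hne t
      rw [h] at this
      simp at this
    have h2 := h1.of_dvd hP0 (Polynomial.map_dvd (algebraMap K F)
      (Finset.dvd_prod_of_mem (fun t : K => (Polynomial.X ^ 2 - Polynomial.C t * Polynomial.X + 1 :
        Polynomial K)) (Finset.mem_univ t)))
    obtain ⟨s, hs⟩ := h2.exists_eval_eq_zero (by
      rw [Polynomial.degree_map]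
      intro h
      have := hne t
      rw [Polynomial.natDegree, h] at this
      simp at this)
    exact ⟨s, by simpa using hs⟩
  have key := ll_inv_mem_of_isSquare (F := F) (a := algebraMap K F a) (b := algebraMap K F b)
    hp hp5 (Γ.map φ) ?_ ?_ ?_ ?_ ?_ ?_
  · obtain ⟨g, hg, e⟩ := key
    rw [← map_inv₀, ← hφl] at e
    rw [← hinj e]
    exact hg
  · rintro _ ⟨g, hg, rfl⟩
    have := hdet g hg
    rw [det_fin_two] at this ⊢
    simp only [hφ]
    rw [← map_mul, ← map_mul, ← map_sub, this, map_one]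
  · rintro _ ⟨g, hg, rfl⟩
    have hd := hdet g hg
    have hd2 : (φ g).val.det = 1 := by
      rw [det_fin_two] at hd ⊢
      simp only [hφ]
      rw [← map_mul, ← map_mul, ← map_sub, hd, map_one]
    rw [discr_fin_two, hd2]
    obtain ⟨s, hs⟩ := hsplit g.val.trace
    have ht : (φ g).val.trace = algebraMap K F g.val.trace := by
      rw [trace_fin_two, trace_fin_two, hφ, hφ, map_add]
    rw [← ht] at hs
    exact ⟨2 * s - (φ g).val.trace, by linear_combination -4 * hs⟩
  · exact ⟨_, ha, hφu a⟩
  · simpa using ha0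
  · exact ⟨_, hb, hφl b⟩
  · simpa using hb0

end DicksonE

/-! ### Symplectic transvections and their parameters -/

section Transv

set_option linter.unusedSimpArgs false

variable {K : Type*} [Field K] {V : Type*} [AddCommGroup V] [Module K V]
  {ω : LinearMap.BilinForm K V} (hA : ω.IsAlt)

/-- The symplectic transvection `u ↦ u + c ω(u, v) v` as a linear automorphism. -/
def tv (v : V) (c : K) : V ≃ₗ[K] V where
  toFun u := u + (c * ω u v) • v
  map_add' x y := by simp only [map_add, LinearMap.add_apply]; module
  map_smul' r x := by simp only [map_smul, LinearMap.smul_apply, smul_eq_mul, RingHom.id_apply]; module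
  invFun u := u - (c * ω u v) • v
  left_inv u := by
    have : ω v v = 0 := hA v
    simp only [map_add, map_smul, LinearMap.add_apply, LinearMap.smul_apply, smul_eq_mul, this]
    module
  right_inv u := by
    have : ω v v = 0 := hA v
    simp only [map_sub, map_smul, LinearMap.sub_apply, LinearMap.smul_apply, smul_eq_mul, this]
    module

theorem tv_apply (v : V) (c : K) (u : V) : tv hA v c u = u + (c * ω u v) • v := rfl

theorem tv_add (v : V) (c d : K) : tv hA v (c + d) = tv hA v c * tv hA v d := by
  ext u
  have : ω v v = 0 := hA v
  simp only [LinearEquiv.mul_apply, tv_apply, map_add, map_smul, LinearMap.add_apply,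
    LinearMap.smul_apply, smul_eq_mul, this]
  module

theorem tv_zero (v : V) : tv hA v 0 = 1 := by
  ext u; simp [tv_apply]

theorem tv_zero_left (c : K) : tv hA 0 c = 1 := by
  ext u; simp [tv_apply]

theorem tv_neg (v : V) (c : K) : tv hA v (-c) = (tv hA v c)⁻¹ := by
  rw [eq_inv_iff_mul_eq_one, ← tv_add, neg_add_cancel, tv_zero]

theorem tv_smul (t : K) (v : V) (c : K) : tv hA (t • v) c = tv hA v (t ^ 2 * c) := by
  ext u
  simp only [tv_apply, map_smul, smul_eq_mul]
  module

theorem tv_isSp (v : V) (c : K) : IsSp ω (tv hA v c) := by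
  intro x y
  have h1 : ω v v = 0 := hA v
  have h2 : ω v y = - ω y v := by rw [hA.neg_eq]
  simp only [tv_apply, map_add, map_smul, LinearMap.add_apply,
    LinearMap.smul_apply, smul_eq_mul, h1, h2]
  ring

theorem tv_isST (v : V) (c : K) : IsSymplecticTransvection ω (tv hA v c) :=
  ⟨⟨v, fun u => ⟨c * ω u v, by rw [tv_apply]; abel⟩⟩, tv_isSp hA v c⟩

/-- Every symplectic transvection has the form `T_v[c]`. -/
theorem exists_tv (hNd : ω.Nondegenerate) {τ : V ≃ₗ[K] V} (h : IsSymplecticTransvection ω τ) :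
    ∃ v c, τ = tv hA v c := by
  obtain ⟨⟨u, hu⟩, hsp⟩ := h
  choose f hf using hu
  have hf' : ∀ v, τ v = v + f v • u := fun v => by rw [← hf]; abel
  by_cases h1 : ∀ v, τ v = v
  · exact ⟨0, 0, by ext v; rw [h1, tv_zero]; rfl⟩
  push Not at h1
  obtain ⟨v0, hv0⟩ := h1
  have huu : ω u u = 0 := hA u
  have key : ∀ w, f v0 * ω w u = f w * ω v0 u := by
    intro w
    have := hsp w v0
    rw [hf' w, hf' v0] at this
    simp only [map_add, map_smul, LinearMap.add_apply, LinearMap.smul_apply, smul_eq_mul,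
      huu] at this
    have h4 := hA.neg_eq u v0
    linear_combination this + f w * h4
  have hc : f v0 ≠ 0 := by
    intro h; apply hv0; rw [hf', h, zero_smul, add_zero]
  have hne : ω v0 u ≠ 0 := by
    intro h
    have : u = 0 := by
      apply hNd.2
      intro w
      have := key w
      rw [h, mul_zero] at this
      simpa [hc] using this
    apply hv0; rw [hf', this, smul_zero, add_zero]
  refine ⟨u, f v0 / ω v0 u, ?_⟩
  ext w
  rw [tv_apply, hf']
  congr 2
  have := key w
  field_simp
  linear_combination -this

theorem tv_conj {g : V ≃ₗ[K] V} {α : Kˣ} (hg : ∀ v w : V, ω (g v) (g w) = (α : K) * ω v w)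
    (v : V) (c : K) : g * tv hA v c * g⁻¹ = tv hA (g v) ((α⁻¹ : Kˣ) * c) := by
  rw [mul_inv_eq_iff_eq_mul]
  ext u
  simp only [LinearEquiv.mul_apply, tv_apply, map_add, map_smul, hg]
  congr 2
  have := α.ne_zero
  rw [Units.val_inv_eq_inv_val]
  field_simp

theorem tv_conj_sp {g : V ≃ₗ[K] V} (hg : IsSp ω g)
    (v : V) (c : K) : g * tv hA v c * g⁻¹ = tv hA (g v) c := by
  have := tv_conj hA (g := g) (α := 1) (fun v w => by simpa using hg v w) v c
  simpa using this

/-- The parameters `c` for which the transvection `T_v[c]` lies in `G`. -/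
def rg (G : Subgroup (V ≃ₗ[K] V)) (v : V) : AddSubgroup K where
  carrier := {c | tv hA v c ∈ G}
  add_mem' {a b} ha hb := by
    simp only [Set.mem_ofPred_eq, tv_add] at *; exact mul_mem ha hb
  zero_mem' := by simp only [Set.mem_ofPred_eq, tv_zero]; exact one_mem _
  neg_mem' {a} ha := by
    simp only [Set.mem_ofPred_eq, tv_neg] at *; exact inv_mem ha

variable {G : Subgroup (V ≃ₗ[K] V)}

theorem mem_rg {v : V} {c : K} : c ∈ rg hA G v ↔ tv hA v c ∈ G := Iff.rfl

theorem mem_rg_smul {t : K} {v : V} {c : K} : c ∈ rg hA G (t • v) ↔ t ^ 2 * c ∈ rg hA G v := by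
  rw [mem_rg, mem_rg, tv_smul]

theorem mem_rg_sp {g : V ≃ₗ[K] V} (hgG : g ∈ G) (hg : IsSp ω g) {v : V} {c : K} :
    c ∈ rg hA G (g v) ↔ c ∈ rg hA G v := by
  rw [mem_rg, mem_rg, ← tv_conj_sp hA hg, Subgroup.mul_mem_cancel_right _ (inv_mem hgG),
    Subgroup.mul_mem_cancel_left _ hgG]

/-- The vectors `v` that are centers of nontrivial transvections in `G`. -/
def IsCtr (G : Subgroup (V ≃ₗ[K] V)) (v : V) : Prop := v ≠ 0 ∧ ∃ c ∈ rg hA G v, c ≠ 0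

theorem IsCtr.smul {v : V} (h : IsCtr hA G v) {t : K} (ht : t ≠ 0) : IsCtr hA G (t • v) := by
  obtain ⟨h0, c, hc, hc0⟩ := h
  refine ⟨smul_ne_zero ht h0, (t ^ 2)⁻¹ * c, ?_, mul_ne_zero (inv_ne_zero (pow_ne_zero 2 ht)) hc0⟩
  rw [mem_rg_smul, mul_inv_cancel_left₀ (pow_ne_zero 2 ht)]
  exact hc

/-- The action on a hyperbolic plane: the matrices `M ∈ SL₂(K)` induced on the plane spanned by
`e, f` by elements of `G` that fix the orthogonal complement of the plane pointwise. -/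
def planeGp (ω : LinearMap.BilinForm K V) (G : Subgroup (V ≃ₗ[K] V)) (e f : V) :
    Subgroup (GL (Fin 2) K) where
  carrier := {M | M.val.det = 1 ∧ ∃ g ∈ G, (∀ x : Fin 2 → K, g (x 0 • e + x 1 • f) =
    (M.val.mulVec x) 0 • e + (M.val.mulVec x) 1 • f) ∧ ∀ w, ω w e = 0 → ω w f = 0 → g w = w}
  mul_mem' {M N} := by
    rintro ⟨dM, g, hg, h1, h2⟩ ⟨dN, g', hg', h1', h2'⟩
    refine ⟨by simp [dM, dN], g * g', mul_mem hg hg', fun x => ?_, fun w he hf => ?_⟩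
    · rw [LinearEquiv.mul_apply, h1', h1, Units.val_mul, ← Matrix.mulVec_mulVec]
    · rw [LinearEquiv.mul_apply, h2' w he hf, h2 w he hf]
  one_mem' := ⟨by simp, 1, one_mem _, fun x => by simp, fun w _ _ => rfl⟩
  inv_mem' {M} := by
    rintro ⟨dM, g, hg, h1, h2⟩
    refine ⟨by simp [dM], g⁻¹, inv_mem hg, fun x => ?_, fun w he hf => ?_⟩
    · apply g.injective
      rw [h1, Matrix.mulVec_mulVec, ← Units.val_mul, mul_inv_cancel, Units.val_one,
        Matrix.one_mulVec]
      exact LinearEquiv.apply_symm_apply g _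
    · apply g.injective
      rw [h2 w he hf]
      exact LinearEquiv.apply_symm_apply g _

theorem ur_mem_planeGp {e f : V} (h : ω e f = 1) {a : K} (ha : a ∈ rg hA G e) :
    ur (-a) ∈ planeGp ω G e f := by
  have h1 : ω e e = 0 := hA e
  have h2 : ω f e = -1 := by rw [← hA.neg_eq, h]
  refine ⟨by simp [ur_val], tv hA e a, ha, fun x => ?_, fun w he hf => ?_⟩
  · simp only [tv_apply, map_add, map_smul, LinearMap.add_apply, LinearMap.smul_apply, smul_eq_mul,
      h1, h2, ur_val, Matrix.mulVec, dotProduct, Fin.sum_univ_two, Matrix.of_apply,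
      Matrix.cons_val_zero, Matrix.cons_val_one]
    module
  · rw [tv_apply, he, mul_zero, zero_smul, add_zero]

theorem ll_mem_planeGp {e f : V} (h : ω e f = 1) {b : K} :
    ll b ∈ planeGp ω G e f ↔ b ∈ rg hA G f := by
  have h1 : ω f f = 0 := hA f
  have h2 : ω f e = -1 := by rw [← hA.neg_eq, h]
  have h3 : ω e e = 0 := hA e
  constructor
  · rintro ⟨-, g, hg, hp, hw⟩
    rw [mem_rg]
    convert hg
    ext u
    rw [tv_apply]
    have hdec : u = (ω u f • e + (-ω u e) • f) + (u - (ω u f • e + (-ω u e) • f)) := by abel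
    have e1 := hp ![ω u f, -ω u e]
    have e2 := hw (u - (ω u f • e + (-ω u e) • f)) (by simp [h2, h3]) (by simp [h, h1])
    simp only [ll_val, Matrix.mulVec, dotProduct, Fin.sum_univ_two, Matrix.of_apply,
      Matrix.cons_val_zero, Matrix.cons_val_one] at e1
    conv_rhs => rw [hdec, map_add, e1, e2]
    module
  · intro hb
    refine ⟨by simp [ll_val], tv hA f b, hb, fun x => ?_, fun w he hf => ?_⟩
    · simp only [tv_apply, map_add, map_smul, LinearMap.add_apply, LinearMap.smul_apply,
        smul_eq_mul, h1, h, ll_val, Matrix.mulVec, dotProduct, Fin.sum_univ_two, Matrix.of_apply,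
        Matrix.cons_val_zero, Matrix.cons_val_one]
      module
    · rw [tv_apply, hf, mul_zero, zero_smul, add_zero]

/-- Dickson's theorem on the hyperbolic plane spanned by `e` and `f`. -/
theorem inv_mem_rg [Finite K] {p : ℕ} [CharP K p] (hp : p.Prime) (hp5 : 5 ≤ p) {e f : V}
    (h : ω e f = 1) {a : K} (ha : a ∈ rg hA G e) (ha0 : a ≠ 0) (hf : IsCtr hA G f) :
    a⁻¹ ∈ rg hA G f := by
  obtain ⟨-, b, hb, hb0⟩ := hf
  have := ll_inv_mem hp hp5 (planeGp ω G e f) (fun g hg => hg.1) (ur_mem_planeGp hA h ha)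
    (neg_ne_zero.2 ha0) ((ll_mem_planeGp hA h).2 hb) hb0
  rw [ll_mem_planeGp hA h, inv_neg] at this
  simpa using neg_mem this

theorem inv_mem_rg' [Finite K] {p : ℕ} [CharP K p] (hp : p.Prime) (hp5 : 5 ≤ p) {e f : V}
    (h : ω e f = 1) {a : K} (ha : a ∈ rg hA G f) (ha0 : a ≠ 0) (he : IsCtr hA G e) :
    a⁻¹ ∈ rg hA G e := by
  have h1 : ω f ((-1 : K) • e) = 1 := by rw [map_smul, ← hA.neg_eq, h]; simp
  have := inv_mem_rg hA hp hp5 h1 ha ha0 (he.smul hA (by simp))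
  rw [mem_rg_smul] at this
  simpa using this

end Transv

/-- Hua's identity: if inversion exchanges the nonzero elements of two additive subgroups of a
field of odd characteristic, the first of which contains `1`, then they are the same subfield. -/
theorem hua {K : Type*} [Field K] {p : ℕ} [CharP K p] (hp : p.Prime) (hp2 : p ≠ 2)
    {L L' : AddSubgroup K} (h1 : (1 : K) ∈ L) (h12 : ∀ a ∈ L, a ≠ 0 → a⁻¹ ∈ L')
    (h21 : ∀ a ∈ L', a ≠ 0 → a⁻¹ ∈ L) : ∃ S : Subfield K, ∀ x, x ∈ S ↔ x ∈ L := by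
  have key : ∀ a ∈ L, ∀ b ∈ L', a * b * a ∈ L := by
    intro a ha b hb
    by_cases ha0 : a = 0
    · simp [ha0]
    by_cases hb0 : b = 0
    · simp [hb0]
    by_cases hab : a * b = 1
    · rw [hab, one_mul]; exact ha
    have hd : b⁻¹ - a ≠ 0 := by
      intro h
      apply hab
      rw [← sub_eq_zero.1 h, inv_mul_cancel₀ hb0]
    have e1 := h12 _ (sub_mem (h21 b hb hb0) ha) hd
    have e2 := add_mem (h12 a ha ha0) e1
    have hs : a⁻¹ + (b⁻¹ - a)⁻¹ = b⁻¹ * (a⁻¹ * (b⁻¹ - a)⁻¹) := by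
      field_simp; ring
    have e3 : a⁻¹ + (b⁻¹ - a)⁻¹ ≠ 0 := by
      rw [hs]
      exact mul_ne_zero (inv_ne_zero hb0) (mul_ne_zero (inv_ne_zero ha0) (inv_ne_zero hd))
    have e4 := sub_mem ha (h21 _ e2 e3)
    convert e4 using 1
    rw [hs, mul_inv, mul_inv, inv_inv, inv_inv, inv_inv]
    field_simp
    ring
  have h1' : (1 : K) ∈ L' := by simpa using h12 1 h1 one_ne_zero
  have hsq : ∀ a ∈ L, a * a ∈ L := fun a ha => by simpa using key a ha 1 h1'
  have hsub : ∀ a ∈ L', a ∈ L := fun b hb => by simpa using key 1 h1 b hb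
  have hhalf : ∀ a, 2 * a ∈ L → a ∈ L := by
    intro a ha
    obtain ⟨m, hm⟩ := hp.odd_of_ne_two hp2
    have h3 : ((m + 1 : ℕ) : K) * (2 * a) = a := by
      have : ((2 * m + 1 : ℕ) : K) = 0 := by rw [← hm, CharP.cast_eq_zero]
      push_cast at this ⊢
      linear_combination a * this
    rw [← h3, ← nsmul_eq_mul]
    exact nsmul_mem ha _
  refine ⟨{ carrier := L, mul_mem' := ?_, one_mem' := h1, add_mem' := add_mem,
            zero_mem' := zero_mem _, neg_mem' := neg_mem, inv_mem' := ?_ }, fun x => Iff.rfl⟩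
  · intro a b ha hb
    apply hhalf
    have := sub_mem (sub_mem (hsq _ (add_mem ha hb)) (hsq a ha)) (hsq b hb)
    convert this using 1
    ring
  · intro a ha
    by_cases h : a = 0
    · simp [h]
    · exact hsub _ (h12 a ha h)

/-! ### Connected components of centers -/

section Components

set_option linter.unusedSimpArgs false

variable {K : Type*} [Field K] {V : Type*} [AddCommGroup V] [Module K V]
  {ω : LinearMap.BilinForm K V} (hA : ω.IsAlt) {G : Subgroup (V ≃ₗ[K] V)}

theorem IsCtr.map (hG : ∀ g ∈ G, IsGSp ω g) {g : V ≃ₗ[K] V} (hg : g ∈ G) {v : V}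
    (hv : IsCtr hA G v) : IsCtr hA G (g v) := by
  obtain ⟨h0, c, hc, hc0⟩ := hv
  obtain ⟨α, hα⟩ := hG g hg
  refine ⟨by simpa using h0, (α⁻¹ : Kˣ) * c, ?_, mul_ne_zero (Units.ne_zero _) hc0⟩
  rw [mem_rg, ← tv_conj hA hα]
  exact mul_mem (mul_mem hg hc) (inv_mem hg)

/-- Two centers are linked when they are not orthogonal. -/
def Adj (G : Subgroup (V ≃ₗ[K] V)) (u v : V) : Prop :=
  IsCtr hA G u ∧ IsCtr hA G v ∧ ω u v ≠ 0

theorem Adj.symm {u v : V} (h : Adj hA G u v) : Adj hA G v u :=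
  ⟨h.2.1, h.1, fun h0 => h.2.2 (by rw [← hA.neg_eq, h0, neg_zero])⟩

theorem Adj.map (hG : ∀ g ∈ G, IsGSp ω g) {g : V ≃ₗ[K] V} (hg : g ∈ G) {u v : V}
    (h : Adj hA G u v) : Adj hA G (g u) (g v) := by
  refine ⟨h.1.map hA hG hg, h.2.1.map hA hG hg, ?_⟩
  obtain ⟨α, hα⟩ := hG g hg
  rw [hα]
  exact mul_ne_zero α.ne_zero h.2.2

/-- Two centers are connected when they are joined by a chain of nonorthogonal centers. -/
def Conn (G : Subgroup (V ≃ₗ[K] V)) : V → V → Prop := Relation.ReflTransGen (Adj hA G)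

theorem Conn.symm {u v : V} (h : Conn hA G u v) : Conn hA G v u := by
  induction h with
  | refl => exact Relation.ReflTransGen.refl
  | tail _ h ih => exact Relation.ReflTransGen.head (Adj.symm hA h) ih

theorem Conn.map (hG : ∀ g ∈ G, IsGSp ω g) {g : V ≃ₗ[K] V} (hg : g ∈ G) {u v : V}
    (h : Conn hA G u v) : Conn hA G (g u) (g v) := by
  induction h with
  | refl => exact Relation.ReflTransGen.refl
  | tail _ h ih => exact Relation.ReflTransGen.tail ih (h.map hA hG hg)

theorem Conn.isCtr {u v : V} (hu : IsCtr hA G u) (h : Conn hA G u v) : IsCtr hA G v := by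
  cases h with
  | refl => exact hu
  | tail _ h => exact h.2.1

/-- The span of the connected component of a center. -/
def comp (G : Subgroup (V ≃ₗ[K] V)) (v : V) : Submodule K V :=
  Submodule.span K {u | Conn hA G v u}

theorem comp_eq {u v : V} (h : Conn hA G u v) : comp hA G u = comp hA G v := by
  unfold comp
  congr 1
  ext w
  exact ⟨fun hw => (Conn.symm hA h).trans hw, fun hw => h.trans hw⟩

theorem self_mem_comp (v : V) : v ∈ comp hA G v :=
  Submodule.subset_span Relation.ReflTransGen.refl

theorem orth_span {s t : Set V} (h : ∀ x ∈ s, ∀ y ∈ t, ω x y = 0) :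
    ∀ x ∈ Submodule.span K s, ∀ y ∈ Submodule.span K t, ω x y = 0 := by
  intro x hx y hy
  have h1 : ∀ x ∈ s, ω x y = 0 := by
    intro x hx
    induction hy using Submodule.span_induction with
    | mem y hy => exact h x hx y hy
    | zero => simp
    | add a b _ _ ha hb => rw [map_add, ha, hb, add_zero]
    | smul c a _ ha => rw [map_smul, ha, smul_zero]
  induction hx using Submodule.span_induction with
  | mem x hx => exact h1 x hx
  | zero => simp
  | add a b _ _ ha hb => rw [map_add, LinearMap.add_apply, ha, hb, add_zero]
  | smul c a _ ha => rw [map_smul, LinearMap.smul_apply, ha, smul_zero]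

theorem comp_orth {u v : V} (hu : IsCtr hA G u) (hv : IsCtr hA G v) (h : ¬ Conn hA G u v) :
    ∀ x ∈ comp hA G u, ∀ y ∈ comp hA G v, ω x y = 0 := by
  apply orth_span
  intro x hx y hy
  by_contra hne
  exact h ((Relation.ReflTransGen.tail hx
    ⟨Conn.isCtr hA hu hx, Conn.isCtr hA hv hy, hne⟩).trans (Conn.symm hA hy))

theorem comp_map (hG : ∀ g ∈ G, IsGSp ω g) {g : V ≃ₗ[K] V} (hg : g ∈ G) (v : V) :
    (comp hA G v).map (g : V →ₗ[K] V) = comp hA G (g v) := by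
  unfold comp
  rw [Submodule.map_span]
  congr 1
  ext w
  constructor
  · rintro ⟨u, hu, rfl⟩
    exact Conn.map hA hG hg hu
  · intro hw
    refine ⟨g⁻¹ w, ?_, LinearEquiv.apply_symm_apply g w⟩
    have := Conn.map hA hG (inv_mem hg) hw
    rwa [show g⁻¹ (g v) = v from LinearEquiv.symm_apply_apply g v] at this

theorem map_eq_of_le {S : Submodule K V} (h : ∀ g ∈ G, S.map (g : V →ₗ[K] V) ≤ S) :
    ∀ g ∈ G, S.map (g : V →ₗ[K] V) = S := by
  intro g hg
  refine le_antisymm (h g hg) fun x hx => ?_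
  exact ⟨g⁻¹ x, h g⁻¹ (inv_mem hg) ⟨x, hx, rfl⟩, LinearEquiv.apply_symm_apply g x⟩

/-- The centers span an invariant subspace, which is all of `V` when `G` is irreducible. -/
theorem span_ctr (hG : ∀ g ∈ G, IsGSp ω g)
    (hirr : ∀ S : Submodule K V, (∀ g ∈ G, S.map (g : V →ₗ[K] V) = S) → S = ⊥ ∨ S = ⊤)
    (hex : ∃ v, IsCtr hA G v) : Submodule.span K {v | IsCtr hA G v} = ⊤ := by
  obtain ⟨v, hv⟩ := hex
  refine (hirr _ (map_eq_of_le fun g hg => ?_)).resolve_left ?_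
  · rw [Submodule.map_span, Submodule.span_le]
    rintro _ ⟨u, hu, rfl⟩
    exact Submodule.subset_span (IsCtr.map hA hG hg hu)
  · intro h
    have : v ∈ Submodule.span K {v | IsCtr hA G v} := Submodule.subset_span hv
    rw [h, Submodule.mem_bot] at this
    exact hv.1 this

/-- If not all centers are connected, the spans of the connected components of centers form the
orthogonal decomposition. They are permuted transitively because the sum of one `G`-orbit of
summands is an invariant subspace. -/
theorem imprimitive [Finite K] [FiniteDimensional K V]
    {n : ℕ} (hn : finrank K V = n) (hNd : ω.Nondegenerate) (hG : ∀ g ∈ G, IsGSp ω g)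
    (hirr : ∀ S : Submodule K V, (∀ g ∈ G, S.map (g : V →ₗ[K] V) = S) → S = ⊥ ∨ S = ⊤)
    (hdis : ∃ u v, IsCtr hA G u ∧ IsCtr hA G v ∧ ¬ Conn hA G u v) :
    ∃ (h m : ℕ) (S : Fin h → Submodule K V),
      2 ≤ h ∧ m < n ∧ h * m = n ∧
      (∀ i, finrank K (S i) = m) ∧
      (∀ i j, i ≠ j → ∀ v ∈ S i, ∀ w ∈ S j, ω v w = 0) ∧
      (∀ i, ∀ v ∈ S i, (∀ w ∈ S i, ω v w = 0) → v = 0) ∧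
      DirectSum.IsInternal S ∧
      (∀ g ∈ G, ∃ σ : Equiv.Perm (Fin h), ∀ i, (S i).map (g : V →ₗ[K] V) = S (σ i)) ∧
      (∀ i j, ∃ g ∈ G, (S i).map (g : V →ₗ[K] V) = S j) := by
  classical
  have hfinV : Finite V := Module.finite_of_finite K
  have hfinS : Finite (Submodule K V) :=
    Finite.of_injective (fun S : Submodule K V => (S : Set V)) SetLike.coe_injective
  obtain ⟨u0, v0, hu0, hv0, hnc⟩ := hdis
  have hspan := span_ctr hA hG hirr ⟨u0, hu0⟩
  let Q : Set (Submodule K V) := {S | ∃ v, IsCtr hA G v ∧ S = comp hA G v}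
  have horth : ∀ S ∈ Q, ∀ T ∈ Q, S ≠ T → ∀ v ∈ S, ∀ w ∈ T, ω v w = 0 := by
    rintro _ ⟨u, hu, rfl⟩ _ ⟨v, hv, rfl⟩ hne
    exact comp_orth hA hu hv fun h => hne (comp_eq hA h)
  have htop : ∀ W : Submodule K V, (∀ v, IsCtr hA G v → v ∈ W) → W = ⊤ := by
    intro W hW
    rw [eq_top_iff, ← hspan, Submodule.span_le]
    exact hW
  have hzero : ∀ x, (∀ S ∈ Q, ∀ w ∈ S, ω x w = 0) → x = 0 := by
    intro x hx
    apply hNd.1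
    intro y
    have : LinearMap.ker (ω x) = ⊤ :=
      htop _ fun v hv => hx _ ⟨v, hv, rfl⟩ v (self_mem_comp hA v)
    have hy : y ∈ LinearMap.ker (ω x) := by rw [this]; trivial
    exact hy
  have hns : ∀ S ∈ Q, ∀ v ∈ S, (∀ w ∈ S, ω v w = 0) → v = 0 := by
    intro S hS v hv h
    apply hzero
    intro T hT w hw
    by_cases hST : S = T
    · exact h w (by rw [hST]; exact hw)
    · exact horth S hS T hT hST v hv w hw
  have hne : ∀ S ∈ Q, S ≠ ⊥ := by
    rintro _ ⟨v, hv, rfl⟩ h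
    have := self_mem_comp hA (G := G) v
    rw [h, Submodule.mem_bot] at this
    exact hv.1 this
  have hmapQ : ∀ g ∈ G, ∀ S ∈ Q, S.map (g : V →ₗ[K] V) ∈ Q := by
    rintro g hg _ ⟨v, hv, rfl⟩
    exact ⟨g v, hv.map hA hG hg, comp_map hA hG hg v⟩
  -- the translates of `S` span `V`, so `T`, if not among them, would be orthogonal to `V`
  have htrans : ∀ S ∈ Q, ∀ T ∈ Q, ∃ g ∈ G, S.map (g : V →ₗ[K] V) = T := by
    intro S hS T hT
    by_contra hcon
    push Not at hcon
    let W : Submodule K V := ⨆ g : G, S.map ((g : V ≃ₗ[K] V) : V →ₗ[K] V)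
    have hW : W = ⊤ := by
      refine (hirr W (map_eq_of_le fun g hg => ?_)).resolve_left ?_
      · rw [Submodule.map_iSup]
        refine iSup_le fun k => ?_
        rw [← Submodule.map_comp]
        exact le_iSup (fun g : G => S.map ((g : V ≃ₗ[K] V) : V →ₗ[K] V)) (⟨g, hg⟩ * k)
      · intro h
        apply hne S hS
        rw [eq_bot_iff, ← h]
        refine le_trans (fun x hx => ?_)
          (le_iSup (fun g : G => S.map ((g : V ≃ₗ[K] V) : V →ₗ[K] V)) 1)
        exact ⟨x, hx, rfl⟩
    apply hne T hT
    rw [eq_bot_iff]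
    intro t ht
    rw [Submodule.mem_bot]
    apply hNd.1
    intro y
    have hy : W ≤ LinearMap.ker (ω t) := by
      refine iSup_le fun g x hx => ?_
      exact horth T hT _ (hmapQ g g.2 S hS) (hcon g g.2).symm t ht x hx
    rw [hW] at hy
    exact hy (x := y) trivial
  let e := Finite.equivFin Q
  have hm : ∀ i j, finrank K (e.symm i).1 = finrank K (e.symm j).1 := by
    intro i j
    obtain ⟨g, hg, h⟩ := htrans _ (e.symm i).2 _ (e.symm j).2
    rw [← h]
    exact (LinearEquiv.finrank_map_eq g _).symm
  have horth' : ∀ i j, i ≠ j → ∀ v ∈ (e.symm i).1, ∀ w ∈ (e.symm j).1, ω v w = 0 := by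
    intro i j hij
    exact horth _ (e.symm i).2 _ (e.symm j).2
      fun h => hij (e.symm.injective (Subtype.ext h))
  have hint : DirectSum.IsInternal (fun i => (e.symm i).1) := by
    rw [DirectSum.isInternal_submodule_iff_iSupIndep_and_iSup_eq_top]
    constructor
    · intro i
      rw [Submodule.disjoint_def]
      intro x hx hx2
      refine hns _ (e.symm i).2 x hx fun w hw => ?_
      have : (⨆ j, ⨆ (_ : j ≠ i), (e.symm j).1) ≤ LinearMap.ker (ω w) :=
        iSup_le fun j => iSup_le fun hj y hy => horth' i j hj.symm w hw y hy
      have h0 : ω w x = 0 := this hx2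
      rw [← hA.neg_eq, h0, neg_zero]
    · apply htop
      intro v hv
      refine Submodule.mem_iSup_of_mem (e ⟨_, v, hv, rfl⟩) ?_
      rw [Equiv.symm_apply_apply]
      exact self_mem_comp hA v
  have hh : 2 ≤ Nat.card Q := by
    have : Nontrivial Q := by
      refine ⟨⟨_, u0, hu0, rfl⟩, ⟨_, v0, hv0, rfl⟩, fun h => hne _ ⟨u0, hu0, rfl⟩ ?_⟩
      have h' := congrArg Subtype.val h
      simp only at h'
      rw [eq_bot_iff]
      intro x hx
      refine hns _ ⟨u0, hu0, rfl⟩ x hx fun w hw => ?_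
      rw [h'] at hw
      exact comp_orth hA hu0 hv0 hnc x hx w hw
    exact Finite.one_lt_card
  let i0 : Fin (Nat.card Q) := e ⟨_, u0, hu0, rfl⟩
  have hmn : Nat.card Q * finrank K (e.symm i0).1 = n := by
    rw [← hn, ← (LinearEquiv.ofBijective
      (DirectSum.coeLinearMap fun i => (e.symm i).1) hint).finrank_eq, Module.finrank_directSum,
      Finset.sum_congr rfl fun i _ => hm i i0,
      Finset.sum_const, Finset.card_univ, Fintype.card_fin, smul_eq_mul]
  have hpos : 0 < finrank K (e.symm i0).1 := by
    rw [Nat.pos_iff_ne_zero, Ne, Submodule.finrank_eq_zero]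
    exact hne _ (e.symm i0).2
  refine ⟨Nat.card Q, finrank K (e.symm i0).1, fun i => (e.symm i).1, hh, ?_, hmn,
    fun i => hm i i0, horth', fun i => hns _ (e.symm i).2, hint, ?_, fun i j =>
      htrans _ (e.symm i).2 _ (e.symm j).2⟩
  · rw [← hmn]; nlinarith
  · intro g hg
    let f : Q → Q := fun S => ⟨_, hmapQ g hg S.1 S.2⟩
    have hf : Function.Injective f := by
      intro S T h
      exact Subtype.ext (Submodule.map_injective_of_injective g.injective (congrArg Subtype.val h))
    refine ⟨(e.symm.trans (Equiv.ofBijective f (Finite.injective_iff_bijective.1 hf))).trans e, ?_⟩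
    intro i
    change _ = (e.symm (e (f (e.symm i)))).1
    rw [Equiv.symm_apply_apply]

end Components

/-! ### The form of `V` over the parameter field -/

section Lattice

variable {K : Type*} [Field K] {V : Type*} [AddCommGroup V] [Module K V]
  {ω : LinearMap.BilinForm K V} (hA : ω.IsAlt) {G : Subgroup (V ≃ₗ[K] V)} {L : Subfield K}

/-- The vectors whose transvections in `G` are exactly those with parameter in `L`. -/
def Good (G : Subgroup (V ≃ₗ[K] V)) (L : Subfield K) (v : V) : Prop :=
  v ≠ 0 ∧ ∀ c, c ∈ rg hA G v ↔ c ∈ L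

variable {hA}

theorem Good.isCtr {v : V} (h : Good hA G L v) : IsCtr hA G v :=
  ⟨h.1, 1, (h.2 1).2 (one_mem L), one_ne_zero⟩

theorem Good.smul {v : V} (h : Good hA G L v) {t : K} (ht : t ∈ L) (h0 : t ≠ 0) :
    Good hA G L (t • v) := by
  refine ⟨smul_ne_zero h0 h.1, fun c => ?_⟩
  rw [mem_rg_smul, h.2]
  refine ⟨fun hc => ?_, fun hc => mul_mem (pow_mem ht 2) hc⟩
  have := mul_mem (inv_mem (pow_mem ht 2)) hc
  rwa [inv_mul_cancel_left₀ (pow_ne_zero 2 h0)] at this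

/-- Transvections of `G` along good vectors map good vectors to good vectors. -/
theorem Good.tv {u v : V} (hu : Good hA G L u) (hv : Good hA G L v) {l : K} (hl : l ∈ L) :
    Good hA G L (u + (l * ω u v) • v) := by
  rw [← tv_apply hA]
  refine ⟨by simpa using hu.1, fun c => ?_⟩
  rw [mem_rg_sp hA ((hv.2 l).2 hl) (tv_isSp hA v l), hu.2]

variable [Finite K] {p : ℕ} [CharP K p] (hp : p.Prime) (hp5 : 5 ≤ p)

include hp hp5

/-- Dickson's theorem, applied to a hyperbolic plane, propagates the parameter field `L`. -/
theorem Good.of_pair {u v : V} (hu : Good hA G L u) (hv : IsCtr hA G v) (h : ω u v = 1) :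
    Good hA G L v := by
  refine ⟨hv.1, fun c => ?_⟩
  by_cases hc0 : c = 0
  · simp [hc0]
  constructor
  · intro hc
    have := inv_mem_rg' hA hp hp5 h hc hc0 hu.isCtr
    rw [hu.2] at this
    simpa using inv_mem this
  · intro hc
    have := inv_mem_rg hA hp hp5 h ((hu.2 _).2 (inv_mem hc)) (inv_ne_zero hc0) hv
    simpa using this

theorem Good.inv_smul {u v : V} (hu : Good hA G L u) (hv : IsCtr hA G v) (h : ω u v ≠ 0) :
    Good hA G L ((ω u v)⁻¹ • v) :=
  hu.of_pair hp hp5 (hv.smul hA (inv_ne_zero h)) (by simp [h])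

theorem Good.sq_mem {u v : V} (hu : Good hA G L u) (hv : Good hA G L v) (h : ω u v ≠ 0) :
    ω u v ^ 2 ∈ L := by
  have h1 := ((hu.inv_smul hp hp5 hv.isCtr h).2 1).2 (one_mem L)
  rw [mem_rg_smul, hv.2, mul_one, inv_pow] at h1
  simpa using inv_mem h1

omit [Finite K] [CharP K p] hp hp5

/-- Two good vectors are linked when their pairing is a nonzero element of `L`. -/
def Link (hA : ω.IsAlt) (G : Subgroup (V ≃ₗ[K] V)) (L : Subfield K) (u v : V) : Prop :=
  Good hA G L u ∧ Good hA G L v ∧ ω u v ∈ L ∧ ω u v ≠ 0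

theorem Link.symm {u v : V} (h : Link hA G L u v) : Link hA G L v u := by
  obtain ⟨h1, h2, h3, h4⟩ := h
  refine ⟨h2, h1, ?_, ?_⟩ <;> rw [← hA.neg_eq]
  · exact neg_mem h3
  · exact neg_ne_zero.2 h4

theorem Link.smul {u v : V} (h : Link hA G L u v) {t : K} (ht : t ∈ L) (h0 : t ≠ 0) :
    Link hA G L u (t • v) := by
  obtain ⟨h1, h2, h3, h4⟩ := h
  refine ⟨h1, h2.smul ht h0, ?_, ?_⟩ <;> rw [map_smul, smul_eq_mul]
  · exact mul_mem ht h3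
  · exact mul_ne_zero h0 h4

include hp hp5 in
/-- Along a chain `u — v — w` of links, `ω u w` and its translates `ω u w + l`, `l ∈ L`, have
squares in `L`; as `2` is invertible this forces `ω u w ∈ L`. -/
theorem Link.pair_mem [Finite K] [CharP K p] {u v w : V} (h : Link hA G L u v)
    (h' : Link hA G L v w) : ω u w ∈ L := by
  obtain ⟨h1, h2, h3, h4⟩ := h
  obtain ⟨-, h6, h7, h8⟩ := h'
  by_cases hs : ω u w = 0
  · rw [hs]; exact zero_mem _
  have e1 := h1.sq_mem hp hp5 h6 hs
  have hl : (ω u v)⁻¹ * (ω v w)⁻¹ ∈ L := mul_mem (inv_mem h3) (inv_mem h7)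
  have g := h1.tv h2 hl
  have e2 : ω (u + ((ω u v)⁻¹ * (ω v w)⁻¹ * ω u v) • v) w = ω u w + 1 := by
    simp only [map_add, map_smul, LinearMap.add_apply, LinearMap.smul_apply, smul_eq_mul]
    field_simp
  by_cases hs1 : ω u w + 1 = 0
  · rw [eq_neg_of_add_eq_zero_left hs1]; exact neg_mem (one_mem _)
  have e3 := g.sq_mem hp hp5 h6 (by rw [e2]; exact hs1)
  rw [e2] at e3
  have e4 := mul_mem (inv_mem (add_mem (one_mem L) (one_mem L)))
    (sub_mem (sub_mem e3 e1) (one_mem L))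
  convert e4 using 1
  have h2 : (2 : K) ≠ 0 := two_ne_zero_of_char hp5
  have : (1 + 1 : K) = 2 := by norm_num
  rw [this]
  field_simp
  ring

/-- Two good vectors at link-distance (at most) two. -/
def R2 (hA : ω.IsAlt) (G : Subgroup (V ≃ₗ[K] V)) (L : Subfield K) (u v : V) : Prop :=
  ∃ w, Link hA G L u w ∧ Link hA G L w v

theorem R2.symm {u v : V} (h : R2 hA G L u v) : R2 hA G L v u := by
  obtain ⟨w, h1, h2⟩ := h
  exact ⟨w, h2.symm, h1.symm⟩

theorem R2.good {u v : V} (h : R2 hA G L u v) : Good hA G L v := h.choose_spec.2.2.1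

theorem R2.smul {u v : V} (h : R2 hA G L u v) {t : K} (ht : t ∈ L) (h0 : t ≠ 0) :
    R2 hA G L u (t • v) := by
  obtain ⟨w, h1, h2⟩ := h
  exact ⟨w, h1, h2.smul ht h0⟩

variable [Finite K] [CharP K p]
include hp hp5

theorem R2.pair_mem {u v : V} (h : R2 hA G L u v) : ω u v ∈ L := by
  obtain ⟨w, h1, h2⟩ := h
  exact h1.pair_mem hp hp5 h2

/-- Chains of links can always be shortened to length two. -/
theorem R2.step {u v x : V} (h : R2 hA G L u v) (h' : Link hA G L v x) : R2 hA G L u x := by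
  obtain ⟨w, h1, h2⟩ := h
  by_cases hwx : ω w x = 0
  · by_cases huv : ω u v = 0
    · refine ⟨w + (1 * ω w v) • v, ⟨h1.1, h2.1.tv h2.2.1 (one_mem L), ?_, ?_⟩,
        h2.1.tv h2.2.1 (one_mem L), h'.2.1, ?_, ?_⟩
      · simpa [huv] using h1.2.2.1
      · simpa [huv] using h1.2.2.2
      · simpa [hwx] using mul_mem h2.2.2.1 h'.2.2.1
      · simpa [hwx] using ⟨h2.2.2.2, h'.2.2.2⟩
    · exact ⟨v, ⟨h1.1, h2.2.1, h1.pair_mem hp hp5 h2, huv⟩, h'⟩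
  · exact ⟨w, h1, h2.1, h'.2.1, h2.pair_mem hp hp5 h', hwx⟩

theorem R2.trans {u v x : V} (h : R2 hA G L u v) (h' : R2 hA G L v x) : R2 hA G L u x := by
  obtain ⟨w, h1, h2⟩ := h'
  exact (h.step hp hp5 h1).step hp hp5 h2

theorem R2.link {z u v : V} (hu : R2 hA G L z u) (hv : R2 hA G L z v) (h : ω u v ≠ 0) :
    Link hA G L u v :=
  ⟨hu.good, hv.good, (hu.symm.trans hp hp5 hv).pair_mem hp hp5, h⟩

theorem R2.add_of_ne {z u v : V} (hu : R2 hA G L z u) (hv : R2 hA G L z v) (h : ω u v ≠ 0) :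
    R2 hA G L z (u + v) := by
  have hl := hu.link hp hp5 hv h
  have e : u + v = u + ((ω u v)⁻¹ * ω u v) • v := by rw [inv_mul_cancel₀ h, one_smul]
  refine hu.step hp hp5 ⟨hu.good, ?_, ?_, ?_⟩
  · rw [e]
    exact hu.good.tv hv.good (inv_mem hl.2.2.1)
  · rw [map_add, hA.self_eq_zero, zero_add]; exact hl.2.2.1
  · rw [map_add, hA.self_eq_zero, zero_add]; exact h

/-- For orthogonal `u` and `v`, write `u + v = (u - w) + (v + w)`, a sum of nonorthogonal vectors. -/
theorem R2.add_of_three {z u v w : V} (hu : R2 hA G L z u) (hv : R2 hA G L z v)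
    (hw : R2 hA G L z w) (huv : ω u v = 0) (huw : ω u w ≠ 0) (hvw : ω v w ≠ 0)
    (hs : ω u w + ω v w ≠ 0) : R2 hA G L z (u + v) := by
  have h1 := hu.add_of_ne hp hp5 (v := (-1 : K) • w)
    (hw.smul (neg_mem (one_mem L)) (by simp)) (by simpa using huw)
  have h2 := hv.add_of_ne hp hp5 hw hvw
  have h3 := h1.add_of_ne hp hp5 h2 (by
    have : ω w v = - ω v w := (hA.neg_eq v w).symm
    simpa [huv, this, hA.self_eq_zero, add_comm] using hs)
  convert h3 using 1
  module

/-- If `ω (u + v) w = 0`, the vector `w` is replaced by a combination `w' + r • x` that is orthogonal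
to none of `u`, `v` and `u + v`. -/
theorem R2.add_aux {z u v w x : V} (hu : R2 hA G L z u) (hv : R2 hA G L z v)
    (hw : R2 hA G L z w) (hx : R2 hA G L z x) (huv : ω u v = 0) (huw : ω u w ≠ 0)
    (hs : ω u w + ω v w = 0) (hux : ω u x ≠ 0) (hvx : ω v x = 0) : R2 hA G L z (u + v) := by
  have hwu : ω w u ≠ 0 := by rw [← hA.neg_eq]; exact neg_ne_zero.2 huw
  have hvu : ω v u = 0 := by rw [← hA.neg_eq, huv, neg_zero]
  have h2 : (2 : K) ≠ 0 := two_ne_zero_of_char hp5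
  obtain ⟨w', hw', e1, e2, e3⟩ : ∃ w', R2 hA G L z w' ∧ ω u w' = ω u w ∧ ω v w' = ω v w ∧
      ω w' x ≠ 0 := by
    by_cases h : ω w x = 0
    · exact ⟨w + u, hw.add_of_ne hp hp5 hu hwu, by simp [hA.self_eq_zero], by simp [hvu],
        by simpa [h] using hux⟩
    · exact ⟨w, hw, rfl, rfl, h⟩
  have hrL : (ω u x)⁻¹ * ω u w ∈ L :=
    mul_mem (inv_mem (hu.link hp hp5 hx hux).2.2.1) (hu.link hp hp5 hw huw).2.2.1
  have hr0 : (ω u x)⁻¹ * ω u w ≠ 0 := mul_ne_zero (inv_ne_zero hux) huw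
  have hw'' := hw'.add_of_ne hp hp5 (hx.smul hrL hr0) (by
    rw [map_smul, smul_eq_mul]; exact mul_ne_zero hr0 e3)
  have e4 : ω u (w' + ((ω u x)⁻¹ * ω u w) • x) = 2 * ω u w := by
    rw [map_add, map_smul, smul_eq_mul, e1]; field_simp; ring
  have e5 : ω v (w' + ((ω u x)⁻¹ * ω u w) • x) = - ω u w := by
    rw [map_add, map_smul, smul_eq_mul, e2, hvx, mul_zero, add_zero]
    linear_combination hs
  refine hu.add_of_three hp hp5 hv hw'' huv ?_ ?_ ?_
  · rw [e4]; exact mul_ne_zero h2 huw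
  · rw [e5]; exact neg_ne_zero.2 huw
  · rw [e4, e5]; convert huw using 1; ring

theorem R2.add {z u v : V} (hsep : ∀ y, (∀ x, R2 hA G L z x → ω y x = 0) → y = 0)
    (hu : R2 hA G L z u) (hv : R2 hA G L z v) (h0 : u + v ≠ 0) : R2 hA G L z (u + v) := by
  by_cases huv : ω u v = 0
  · obtain ⟨w, h1, h2⟩ := hu.symm.trans hp hp5 hv
    have hw := hu.step hp hp5 h1
    by_cases hs : ω u w + ω v w = 0
    · obtain ⟨x, hx, hne⟩ : ∃ x, R2 hA G L z x ∧ ω (u + v) x ≠ 0 := by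
        by_contra hcon
        push Not at hcon
        exact h0 (hsep _ hcon)
      rw [map_add, LinearMap.add_apply] at hne
      by_cases hux : ω u x = 0
      · rw [add_comm]
        exact hv.add_aux hp hp5 hu hw hx (by rw [← hA.neg_eq, huv, neg_zero]) h2.symm.2.2.2
          (by rw [add_comm]; exact hs) (by simpa [hux] using hne) hux
      · by_cases hvx : ω v x = 0
        · exact hu.add_aux hp hp5 hv hw hx huv h1.2.2.2 hs hux hvx
        · exact hu.add_of_three hp hp5 hv hx huv hux hvx hne
    · exact hu.add_of_three hp hp5 hv hw huv h1.2.2.2 h2.symm.2.2.2 hs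
  · exact hu.add_of_ne hp hp5 hv huv

/-- Every center connected to `z` has a multiple at link-distance two from `z`. -/
theorem conn_R2 {z v : V} (hz : R2 hA G L z z) (h : Conn hA G z v) :
    ∃ t : K, t ≠ 0 ∧ R2 hA G L z (t • v) := by
  induction h with
  | refl => exact ⟨1, one_ne_zero, by simpa using hz⟩
  | @tail x y _ h ih =>
    obtain ⟨t, ht, hR⟩ := ih
    have hc : ω (t • x) y ≠ 0 := by simpa using ⟨ht, h.2.2⟩
    refine ⟨_, inv_ne_zero hc, hR.step hp hp5
      ⟨hR.good, hR.good.inv_smul hp hp5 h.2.1 hc, ?_, ?_⟩⟩ <;>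
    rw [map_smul, smul_eq_mul, inv_mul_cancel₀ hc]
    · exact one_mem L
    · exact one_ne_zero

/-- When any two transvection centers are connected, suitable multiples of the centers form
an `L`-form `E` of the symplectic space. -/
theorem exists_lattice (hNd : ω.Nondegenerate) {z : V} (h1 : (1 : K) ∈ rg hA G z)
    (hzc : IsCtr hA G z) (hspan : Submodule.span K {v | IsCtr hA G v} = ⊤)
    (hconn : ∀ v, IsCtr hA G v → Conn hA G z v) :
    ∃ (L : Subfield K) (E : AddSubgroup V), (∀ l ∈ L, ∀ v ∈ E, l • v ∈ E) ∧
      (∀ x, (∀ y ∈ E, ω x y = 0) → x = 0) ∧ (∀ u ∈ E, ∀ v ∈ E, ω u v ∈ L) ∧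
      (∀ v ∈ E, ∀ l ∈ L, tv hA v l ∈ G) ∧
      (∀ v c, tv hA v c ∈ G → ∃ v' ∈ E, ∃ l ∈ L, tv hA v c = tv hA v' l) := by
  have hsep0 : ∀ x, (∀ v, IsCtr hA G v → ω x v = 0) → x = 0 := by
    intro x hx
    apply hNd.1
    intro y
    have : Submodule.span K {v | IsCtr hA G v} ≤ LinearMap.ker (ω x) :=
      Submodule.span_le.2 hx
    rw [hspan] at this
    exact this (x := y) trivial
  obtain ⟨y, hy, hzy⟩ : ∃ y, IsCtr hA G y ∧ ω z y ≠ 0 := by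
    by_contra hcon
    push Not at hcon
    exact hzc.1 (hsep0 z hcon)
  have hy' := hy.smul hA (inv_ne_zero hzy)
  have hzy' : ω z ((ω z y)⁻¹ • y) = 1 := by simp [hzy]
  obtain ⟨L, hL⟩ := hua hp (by omega) h1
    (fun a ha h0 => inv_mem_rg hA hp hp5 hzy' ha h0 hy')
    (fun a ha h0 => inv_mem_rg' hA hp hp5 hzy' ha h0 hzc)
  have gz : Good hA G L z := ⟨hzc.1, fun c => (hL c).symm⟩
  have lz : Link hA G L z ((ω z y)⁻¹ • y) :=
    ⟨gz, gz.of_pair hp hp5 hy' hzy', by rw [hzy']; exact one_mem L, by rw [hzy']; exact one_ne_zero⟩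
  have hz : R2 hA G L z z := ⟨_, lz, lz.symm⟩
  have hmul : ∀ v, IsCtr hA G v → ∃ t : K, t ≠ 0 ∧ R2 hA G L z (t • v) :=
    fun v hv => conn_R2 hp hp5 hz (hconn v hv)
  have hsep : ∀ x, (∀ y, R2 hA G L z y → ω x y = 0) → x = 0 := by
    intro x hx
    apply hsep0
    intro v hv
    obtain ⟨t, ht, hR⟩ := hmul v hv
    have := hx _ hR
    rw [map_smul, smul_eq_mul] at this
    exact (mul_eq_zero.1 this).resolve_left ht
  refine ⟨L, { carrier := {v | v = 0 ∨ R2 hA G L z v}, zero_mem' := Or.inl rfl,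
               add_mem' := ?_, neg_mem' := ?_ }, ?_, ?_, ?_, ?_, ?_⟩
  · rintro u v (rfl | hu) (rfl | hv)
    · left; simp
    · right; simpa using hv
    · right; simpa using hu
    · by_cases h0 : u + v = 0
      · exact Or.inl h0
      · exact Or.inr (hu.add hp hp5 hsep hv h0)
  · rintro v (rfl | hv)
    · left; simp
    · right; simpa using hv.smul (neg_mem (one_mem L)) (by simp)
  · rintro l hl v (rfl | hv)
    · left; simp
    · by_cases h0 : l = 0
      · left; simp [h0]
      · exact Or.inr (hv.smul hl h0)
  · intro x hx
    exact hsep x fun y hy => hx y (Or.inr hy)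
  · rintro u (rfl | hu) v (rfl | hv)
    · simp
    · simp
    · simp
    · exact (hu.symm.trans hp hp5 hv).pair_mem hp hp5
  · rintro v (rfl | hv) l hl
    · rw [tv_zero_left]; exact one_mem G
    · exact (hv.good.2 l).2 hl
  · intro v c hvc
    by_cases hv0 : v = 0
    · exact ⟨0, Or.inl rfl, 0, zero_mem L, by rw [hv0, tv_zero_left, tv_zero_left]⟩
    by_cases hc0 : c = 0
    · exact ⟨0, Or.inl rfl, 0, zero_mem L, by rw [hc0, tv_zero, tv_zero]⟩
    obtain ⟨t, ht, hR⟩ := hmul v ⟨hv0, c, hvc, hc0⟩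
    have e : tv hA v c = tv hA (t • v) ((t ^ 2)⁻¹ * c) := by
      rw [tv_smul, mul_inv_cancel_left₀ (pow_ne_zero 2 ht)]
    refine ⟨t • v, Or.inr hR, (t ^ 2)⁻¹ * c, ?_, e⟩
    rw [← hR.good.2, mem_rg, ← e]
    exact hvc

end Lattice

/-! ### Symplectic bases of an `L`-form -/

section SymplecticBasis

variable {K : Type*} [Field K] {V : Type*} [AddCommGroup V] [Module K V]
  {ω : LinearMap.BilinForm K V} (hA : ω.IsAlt)

/-- A partial symplectic basis consisting of hyperbolic pairs `e i, f i`. -/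
def Hyp (ω : LinearMap.BilinForm K V) {m : ℕ} (e f : Fin m → V) : Prop :=
  (∀ i j, ω (e i) (e j) = 0) ∧ (∀ i j, ω (f i) (f j) = 0) ∧
    ∀ i j, ω (e i) (f j) = if i = j then 1 else 0

/-- The orthogonal projection to the span of the hyperbolic pairs `e i, f i`. -/
def pr (ω : LinearMap.BilinForm K V) {m : ℕ} (e f : Fin m → V) (v : V) : V :=
  ∑ i, (ω v (f i) • e i - ω v (e i) • f i)

include hA

theorem Hyp.swap {m : ℕ} {e f : Fin m → V} (h : Hyp ω e f) (i j : Fin m) :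
    ω (f i) (e j) = - if i = j then 1 else 0 := by
  rw [← hA.neg_eq, h.2.2, eq_comm]
  simp only [eq_comm]

theorem pr_e {m : ℕ} {e f : Fin m → V} (h : Hyp ω e f) (v : V) (j : Fin m) :
    ω (pr ω e f v) (e j) = ω v (e j) := by
  simp [pr, h.1, h.swap hA]

omit hA in
theorem pr_f {m : ℕ} {e f : Fin m → V} (h : Hyp ω e f) (v : V) (j : Fin m) :
    ω (pr ω e f v) (f j) = ω v (f j) := by
  simp [pr, h.2.1, h.2.2]

omit hA in
theorem pr_orth {m : ℕ} {e f : Fin m → V} {x : V} (h1 : ∀ i, ω x (e i) = 0)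
    (h2 : ∀ i, ω x (f i) = 0) (v : V) : ω x (pr ω e f v) = 0 := by
  simp [pr, h1, h2]

theorem Hyp.linearIndependent {m : ℕ} {e f : Fin m → V} (h : Hyp ω e f) :
    LinearIndependent K (Sum.elim e f) := by
  rw [Fintype.linearIndependent_iff]
  intro g hg
  rw [Fintype.sum_sum_type] at hg
  simp only [Sum.elim_inl, Sum.elim_inr] at hg
  rintro (j | j)
  · have := congrArg (fun v => ω v (f j)) hg
    simpa [h.2.1, h.2.2] using this
  · have := congrArg (fun v => ω v (e j)) hg
    simpa [h.1, h.swap hA] using this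

theorem Hyp.cons {m : ℕ} {e f : Fin m → V} (h : Hyp ω e f) {x y : V} (hxy : ω x y = 1)
    (hxe : ∀ i, ω x (e i) = 0) (hxf : ∀ i, ω x (f i) = 0)
    (hye : ∀ i, ω y (e i) = 0) (hyf : ∀ i, ω y (f i) = 0) :
    Hyp ω (Fin.cons x e : Fin (m + 1) → V) (Fin.cons y f : Fin (m + 1) → V) := by
  have h1 : ∀ i, ω (e i) x = 0 := fun i => by rw [← hA.neg_eq, hxe, neg_zero]
  have h2 : ∀ i, ω (e i) y = 0 := fun i => by rw [← hA.neg_eq, hye, neg_zero]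
  have h3 : ∀ i, ω (f i) y = 0 := fun i => by rw [← hA.neg_eq, hyf, neg_zero]
  refine ⟨fun i j => ?_, fun i j => ?_, fun i j => ?_⟩ <;>
  · refine Fin.cases ?_ (fun i => ?_) i <;> refine Fin.cases ?_ (fun j => ?_) j <;>
    simp [hA.self_eq_zero, h1, h2, h3, hxe, hxf, hyf, h.1, h.2.1, h.2.2, hxy, Fin.succ_ne_zero,
      (Fin.succ_ne_zero _).symm]

/-- An `L`-form of a symplectic space contains a symplectic basis. -/
theorem exists_symplecticBasis [FiniteDimensional K V] {L : Subfield K} {E : AddSubgroup V}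
    (hsm : ∀ l ∈ L, ∀ v ∈ E, l • v ∈ E) (hsep : ∀ x, (∀ y ∈ E, ω x y = 0) → x = 0)
    (hpair : ∀ u ∈ E, ∀ v ∈ E, ω u v ∈ L) :
    ∃ (m : ℕ) (b : Basis (Fin m ⊕ Fin m) K V), IsSymplecticBasis ω b ∧ ∀ i, b i ∈ E := by
  let P : ℕ → Prop := fun m => ∃ e f : Fin m → V, Hyp ω e f ∧ (∀ i, e i ∈ E) ∧ ∀ i, f i ∈ E
  have hbd : ∀ m, P m → m ≤ finrank K V := by
    rintro m ⟨e, f, h, -⟩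
    have := (h.linearIndependent hA).fintype_card_le_finrank
    simp at this
    omega
  have hP0 : P 0 := ⟨Fin.elim0, Fin.elim0, ⟨fun i => i.elim0, fun i => i.elim0, fun i => i.elim0⟩,
    fun i => i.elim0, fun i => i.elim0⟩
  classical
  have hmax := Nat.findGreatest_spec (P := P) (Nat.zero_le (finrank K V)) hP0
  have hgr : ¬ P (Nat.findGreatest P (finrank K V) + 1) := fun h => by
    have := Nat.le_findGreatest (hbd _ h) h
    omega
  set m := Nat.findGreatest P (finrank K V)
  obtain ⟨e, f, h, he, hf⟩ := hmax
  have hprE : ∀ v ∈ E, v - pr ω e f v ∈ E := fun v hv => sub_mem hv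
    (sum_mem fun i _ => sub_mem (hsm _ (hpair v hv _ (hf i)) _ (he i))
      (hsm _ (hpair v hv _ (he i)) _ (hf i)))
  have o1 : ∀ v i, ω (v - pr ω e f v) (e i) = 0 := fun v i => by
    rw [map_sub, LinearMap.sub_apply, pr_e hA h, sub_self]
  have o2 : ∀ v i, ω (v - pr ω e f v) (f i) = 0 := fun v i => by
    rw [map_sub, LinearMap.sub_apply, pr_f h, sub_self]
  -- maximality: no nonzero vector of `E` is orthogonal to all the hyperbolic pairs
  have hE : ∀ y ∈ E, (∀ i, ω y (e i) = 0) → (∀ i, ω y (f i) = 0) → y = 0 := by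
    intro y hy y1 y2
    apply hsep
    by_contra hcon
    push Not at hcon
    obtain ⟨x, hx, hne⟩ := hcon
    apply hgr
    have hc : ω y (x - pr ω e f x) = ω y x := by rw [map_sub, pr_orth y1 y2, sub_zero]
    refine ⟨_, _, h.cons hA (x := y) (y := (ω y x)⁻¹ • (x - pr ω e f x)) ?_ y1 y2
      (fun i => ?_) (fun i => ?_), fun i => ?_, fun i => ?_⟩
    · rw [map_smul, hc, smul_eq_mul, inv_mul_cancel₀ hne]
    · rw [map_smul, LinearMap.smul_apply, o1, smul_zero]
    · rw [map_smul, LinearMap.smul_apply, o2, smul_zero]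
    · exact Fin.cases hy he i
    · exact Fin.cases (hsm _ (inv_mem (hpair y hy x hx)) _ (hprE x hx)) hf i
  have hall : ∀ v, v = pr ω e f v := by
    intro v
    rw [← sub_eq_zero]
    apply hsep
    intro y hy
    have h0 := hE _ (hprE y hy) (o1 y) (o2 y)
    rw [sub_eq_zero.1 h0]
    exact pr_orth (o1 v) (o2 v) y
  have hspan : ⊤ ≤ Submodule.span K (Set.range (Sum.elim e f)) := by
    intro v _
    rw [hall v]
    refine sum_mem fun i _ => sub_mem (Submodule.smul_mem _ _ (Submodule.subset_span ⟨.inl i, rfl⟩))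
      (Submodule.smul_mem _ _ (Submodule.subset_span ⟨.inr i, rfl⟩))
  refine ⟨m, Basis.mk (h.linearIndependent hA) hspan, ⟨?_, ?_, ?_⟩, ?_⟩
  · simpa using h.1
  · simpa using h.2.1
  · simpa using h.2.2
  · rintro (i | i)
    · simpa using he i
    · simpa using hf i

omit hA in
theorem repr_inl {m : ℕ} {b : Basis (Fin m ⊕ Fin m) K V} (hb : IsSymplecticBasis ω b) (v : V)
    (i : Fin m) : b.repr v (Sum.inl i) = ω v (b (Sum.inr i)) := by
  conv_rhs => rw [← b.sum_repr v]
  simp [-Basis.sum_repr, hb.2.1, hb.2.2]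

theorem repr_inr {m : ℕ} {b : Basis (Fin m ⊕ Fin m) K V} (hb : IsSymplecticBasis ω b) (v : V)
    (i : Fin m) : b.repr v (Sum.inr i) = - ω v (b (Sum.inl i)) := by
  have h : Hyp ω (fun i => b (.inl i)) (fun i => b (.inr i)) := hb
  conv_rhs => rw [← b.sum_repr v]
  simp [-Basis.sum_repr, hb.1, h.swap hA]

end SymplecticBasis

/-! ### Generation by transvections -/

section Generation

variable {K : Type*} [Field K] {V : Type*} [AddCommGroup V] [Module K V]
  {ω : LinearMap.BilinForm K V} (hA : ω.IsAlt)

/-- The subspace of vectors fixed by `g`. -/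
def fixSp (g : V ≃ₗ[K] V) : Submodule K V where
  carrier := {v | g v = v}
  add_mem' {a b} ha hb := by
    simp only [Set.mem_ofPred_eq, map_add] at *; rw [ha, hb]
  zero_mem' := by simp
  smul_mem' c a ha := by
    simp only [Set.mem_ofPred_eq, map_smul] at *; rw [ha]

theorem mem_fixSp {g : V ≃ₗ[K] V} {v : V} : v ∈ fixSp g ↔ g v = v := Iff.rfl

variable {L : Subfield K} {E : AddSubgroup V} {H : Subgroup (V ≃ₗ[K] V)}

/-- A transvection along `g v - v` fixes every vector fixed by the symplectic map `g`. -/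
theorem tv_fix {g : V ≃ₗ[K] V} (hg : IsSp ω g) (v : V) (c : K) {w : V} (hw : g w = w) :
    tv hA (g v - v) c w = w := by
  have : ω w (g v) = ω w v := by rw [← hg w v, hw]
  rw [tv_apply, map_sub, this, sub_self, mul_zero, zero_smul, add_zero]

/-- If `ω v (g v) ≠ 0`, a transvection along `g v - v` carries `v` to `g v`; dividing by it
enlarges the fixed space. -/
theorem reduce (hsm : ∀ l ∈ L, ∀ v ∈ E, l • v ∈ E) (hpair : ∀ u ∈ E, ∀ v ∈ E, ω u v ∈ L)
    (hH : ∀ v ∈ E, ∀ l ∈ L, tv hA v l ∈ H) {g : V ≃ₗ[K] V} (hg : IsSp ω g)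
    (hgE : ∀ x ∈ E, g x ∈ E) {v : V} (hv : v ∈ E) (hne : ω v (g v) ≠ 0) :
    ∃ g' : V ≃ₗ[K] V, IsSp ω g' ∧ (∀ x ∈ E, g' x ∈ E) ∧ fixSp g < fixSp g' ∧
      (g' ∈ H → g ∈ H) := by
  have hxE : g v - v ∈ E := sub_mem (hgE v hv) hv
  have hl : (ω v (g v))⁻¹ ∈ L := inv_mem (hpair v hv _ (hgE v hv))
  have hT := hH _ hxE _ (neg_mem hl)
  have hTv : tv hA (g v - v) (-(ω v (g v))⁻¹) (g v) = v := by
    have e : ω (g v) (g v - v) = ω v (g v) := by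
      rw [map_sub, hA.self_eq_zero, zero_sub, hA.neg_eq]
    rw [tv_apply, e, neg_mul, inv_mul_cancel₀ hne]
    module
  refine ⟨tv hA (g v - v) (-(ω v (g v))⁻¹) * g, fun x y => ?_, fun x hx => ?_, ?_, fun h => ?_⟩
  · rw [LinearEquiv.mul_apply, LinearEquiv.mul_apply, tv_isSp, hg]
  · rw [LinearEquiv.mul_apply, tv_apply]
    exact add_mem (hgE x hx) (hsm _ (mul_mem (neg_mem hl) (hpair _ (hgE x hx) _ hxE)) _ hxE)
  · refine lt_of_le_of_ne (fun w hw => ?_) fun h => ?_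
    · rw [mem_fixSp] at hw ⊢
      rw [LinearEquiv.mul_apply, hw, tv_fix hA hg v _ hw]
    · have : v ∈ fixSp g := by
        rw [h, mem_fixSp, LinearEquiv.mul_apply, hTv]
      rw [mem_fixSp] at this
      rw [this, hA.self_eq_zero] at hne
      exact hne rfl
  · exact (Subgroup.mul_mem_cancel_left H hT).1 h

/-- Transvections generate the symplectic group of the `L`-form `E`. -/
theorem mem_of_isSp [FiniteDimensional K V] (hsm : ∀ l ∈ L, ∀ v ∈ E, l • v ∈ E)
    (hsep : ∀ x, (∀ y ∈ E, ω x y = 0) → x = 0) (hpair : ∀ u ∈ E, ∀ v ∈ E, ω u v ∈ L)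
    (hH : ∀ v ∈ E, ∀ l ∈ L, tv hA v l ∈ H) {g : V ≃ₗ[K] V} (hg : IsSp ω g)
    (hgE : ∀ x ∈ E, g x ∈ E) : g ∈ H := by
  generalize hF : fixSp g = F
  induction F using WellFoundedGT.induction generalizing g with
  | ind F ih =>
    by_cases hA1 : ∃ v ∈ E, ω v (g v) ≠ 0
    · obtain ⟨v, hv, hne⟩ := hA1
      obtain ⟨g', h1, h2, h3, h4⟩ := reduce hA hsm hpair hH hg hgE hv hne
      exact h4 (ih _ (by rw [← hF]; exact h3) h1 h2 rfl)
    push Not at hA1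
    by_cases hfix : ∀ v ∈ E, g v = v
    · have : g = 1 := by
        ext x
        rw [← sub_eq_zero]
        apply hsep
        intro y hy
        have h1 := hg x y
        rw [hfix y hy] at h1
        simp [h1]
      rw [this]
      exact one_mem H
    push Not at hfix
    obtain ⟨v, hv, hgv⟩ := hfix
    obtain ⟨u, hu, hne⟩ : ∃ u ∈ E, ω (g v - v) u ≠ 0 := by
      by_contra hcon
      push Not at hcon
      exact hgv (sub_eq_zero.1 (hsep _ hcon))
    have hxE : g u - u ∈ E := sub_mem (hgE u hu) hu
    -- the transvection along `g u - u` makes `ω v (g v)` nonzero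
    have hsp : IsSp ω (tv hA (g u - u) 1 * g) := fun x y => by
      rw [LinearEquiv.mul_apply, LinearEquiv.mul_apply, tv_isSp, hg]
    have hE1 : ∀ x ∈ E, (tv hA (g u - u) 1 * g) x ∈ E := fun x hx => by
      rw [LinearEquiv.mul_apply, tv_apply, one_mul]
      exact add_mem (hgE x hx) (hsm _ (hpair _ (hgE x hx) _ hxE) _ hxE)
    have hle : fixSp g ≤ fixSp (tv hA (g u - u) 1 * g) := fun w hw => by
      rw [mem_fixSp] at hw ⊢
      rw [LinearEquiv.mul_apply, hw, tv_fix hA hg u _ hw]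
    have hne1 : ω v ((tv hA (g u - u) 1 * g) v) ≠ 0 := by
      have e1 := hA1 v hv
      have e2 := hA1 u hu
      have e3 := hA1 _ (add_mem hu hv)
      have e4 := hg v u
      have e5 := hA.neg_eq (g v) u
      have h1 : ω (g v) (g u - u) = - ω (g v - v) u := by
        simp only [map_sub, LinearMap.sub_apply]
        linear_combination e4
      have h2 : ω v (g u - u) = ω (g v - v) u := by
        simp only [map_sub, map_add, LinearMap.add_apply, LinearMap.sub_apply] at e3 ⊢
        linear_combination e3 - e1 - e2 + e5
      rw [LinearEquiv.mul_apply, tv_apply, map_add, e1, map_smul, h1, h2]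
      simp only [zero_add, smul_eq_mul, one_mul]
      exact mul_ne_zero (neg_ne_zero.2 hne) hne
    obtain ⟨g', h1, h2, h3, h4⟩ := reduce hA hsm hpair hH hsp hE1 hv hne1
    have := h4 (ih _ (by rw [← hF]; exact hle.trans_lt h3) h1 h2 rfl)
    exact (Subgroup.mul_mem_cancel_left H (hH _ hxE _ (one_mem L))).1 this

/-- The symplectic transvections of `G` generate the symplectic group over `L`. -/
theorem closure_eq [FiniteDimensional K V] (hNd : ω.Nondegenerate) {G : Subgroup (V ≃ₗ[K] V)}
    (hsm : ∀ l ∈ L, ∀ v ∈ E, l • v ∈ E)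
    (hsep : ∀ x, (∀ y ∈ E, ω x y = 0) → x = 0) (hpair : ∀ u ∈ E, ∀ v ∈ E, ω u v ∈ L)
    (htv : ∀ v ∈ E, ∀ l ∈ L, tv hA v l ∈ G)
    (hform : ∀ v c, tv hA v c ∈ G → ∃ v' ∈ E, ∃ l ∈ L, tv hA v c = tv hA v' l)
    {m : ℕ} {b : Basis (Fin m ⊕ Fin m) K V} (hb : IsSymplecticBasis ω b) (hbE : ∀ i, b i ∈ E) :
    ((Subgroup.closure {τ : V ≃ₗ[K] V | τ ∈ G ∧ IsSymplecticTransvection ω τ} :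
      Subgroup (V ≃ₗ[K] V)) : Set (V ≃ₗ[K] V)) = SpL ω b L := by
  have hEL : ∀ x ∈ E, ∀ i, b.repr x i ∈ L := by
    rintro x hx (i | i)
    · rw [repr_inl hb]; exact hpair _ hx _ (hbE _)
    · rw [repr_inr hA hb]; exact neg_mem (hpair _ hx _ (hbE _))
  have hLE : ∀ x, (∀ i, b.repr x i ∈ L) → x ∈ E := by
    intro x hx
    rw [← b.sum_repr x]
    exact sum_mem fun i _ => hsm _ (hx i) _ (hbE i)
  apply Set.Subset.antisymm
  · have key : ∀ g ∈ Subgroup.closure {τ : V ≃ₗ[K] V | τ ∈ G ∧ IsSymplecticTransvection ω τ},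
        IsSp ω g ∧ ∀ x, g x ∈ E ↔ x ∈ E := by
      intro g hg
      induction hg using Subgroup.closure_induction with
      | mem τ hτ =>
        refine ⟨hτ.2.2, ?_⟩
        obtain ⟨v, c, rfl⟩ := exists_tv hA hNd hτ.2
        obtain ⟨v', hv', l, hl, e⟩ := hform v c hτ.1
        rw [e]
        have h1 : ∀ l ∈ L, ∀ x ∈ E, tv hA v' l x ∈ E := fun l hl x hx =>
          add_mem hx (hsm _ (mul_mem hl (hpair _ hx _ hv')) _ hv')
        refine fun x => ⟨fun hx => ?_, h1 l hl x⟩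
        have := h1 (-l) (neg_mem hl) _ hx
        rwa [← LinearEquiv.mul_apply, ← tv_add, neg_add_cancel, tv_zero] at this
      | one => exact ⟨fun _ _ => rfl, fun _ => Iff.rfl⟩
      | mul x y _ _ hx hy =>
        exact ⟨fun v w => by rw [LinearEquiv.mul_apply, LinearEquiv.mul_apply, hx.1, hy.1],
          fun v => by rw [LinearEquiv.mul_apply, hx.2, hy.2]⟩
      | inv x _ hx =>
        have e : ∀ v, x (x⁻¹ v) = v := LinearEquiv.apply_symm_apply x
        exact ⟨fun v w => by rw [← hx.1, e, e], fun v => by rw [← hx.2, e]⟩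
    intro g hg
    refine ⟨(key g hg).1, fun i j => ?_⟩
    rw [LinearMap.toMatrix_apply]
    exact hEL _ (((key g hg).2 _).2 (hbE j)) i
  · rintro g ⟨hg, hM⟩
    have hgb : ∀ j, g (b j) ∈ E := fun j => hLE _ fun i => by
      have := hM i j
      rwa [LinearMap.toMatrix_apply] at this
    refine mem_of_isSp hA hsm hsep hpair
      (fun v hv l hl => Subgroup.subset_closure (And.intro (htv v hv l hl) (tv_isST hA v l)))
      hg fun x hx => ?_
    rw [← b.sum_repr x, map_sum]
    refine sum_mem fun i _ => ?_
    rw [map_smul]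
    exact hsm _ (hEL x hx i) _ (hgb i)

end Generation

/-! ### Rescaling the symplectic form -/

section Rescaling

variable {K : Type*} [Field K] {V : Type*} [AddCommGroup V] [Module K V]
  {ω : LinearMap.BilinForm K V}

theorem isSp_smul {a : K} (ha : a ≠ 0) {g : V ≃ₗ[K] V} : IsSp (a • ω) g ↔ IsSp ω g := by
  refine forall_congr' fun v => forall_congr' fun w => ?_
  simp [ha]

theorem isST_smul {a : K} (ha : a ≠ 0) {g : V ≃ₗ[K] V} :
    IsSymplecticTransvection (a • ω) g ↔ IsSymplecticTransvection ω g :=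
  and_congr Iff.rfl (isSp_smul ha)

/-- Rescaling the first half of a symplectic basis for `a • ω` gives a symplectic basis for `ω`,
and the corresponding change of basis is a symplectic similitude. -/
theorem exists_basis_conj {a : K} (ha : a ≠ 0) {m : ℕ} {b : Basis (Fin m ⊕ Fin m) K V}
    (hb : IsSymplecticBasis (a • ω) b) (L : Subfield K) :
    ∃ b' : Basis (Fin m ⊕ Fin m) K V, IsSymplecticBasis ω b' ∧ ∃ A : V ≃ₗ[K] V, IsGSp ω A ∧
      SpL (a • ω) b L = (fun x => A * x * A⁻¹) '' SpL ω b' L := by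
  let w : Fin m ⊕ Fin m → Kˣ := Sum.elim (fun _ => Units.mk0 a ha) fun _ => 1
  let b' := b.unitsSMul w
  have hl : ∀ i, b' (Sum.inl i) = a • b (Sum.inl i) := fun i => Basis.unitsSMul_apply _
  have hr : ∀ i, b' (Sum.inr i) = b (Sum.inr i) := fun i =>
    (Basis.unitsSMul_apply _).trans (one_smul _ _)
  obtain ⟨h1, h2, h3⟩ := hb
  simp only [LinearMap.smul_apply, smul_eq_mul, mul_eq_zero, ha, false_or] at h1 h2 h3
  have hb' : IsSymplecticBasis ω b' := by
    refine ⟨fun i j => ?_, fun i j => ?_, fun i j => ?_⟩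
    · simp [hl, h1]
    · simp [hr, h2]
    · rw [hl, hr, map_smul, LinearMap.smul_apply, smul_eq_mul, h3]
  let A : V ≃ₗ[K] V := b'.equiv b (Equiv.refl _)
  have hAb : ∀ i, A (b' i) = b i := fun i => by simp [A]
  have hA' : ∀ v, A (A⁻¹ v) = v := LinearEquiv.apply_symm_apply A
  have hA'' : ∀ v, A⁻¹ (A v) = v := LinearEquiv.symm_apply_apply A
  have hGA : ∀ v w, ω (A v) (A w) = a⁻¹ * ω v w := by
    have : ω.compl₁₂ (A : V →ₗ[K] V) (A : V →ₗ[K] V) = a⁻¹ • ω := by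
      refine LinearMap.BilinForm.ext_basis b' fun i j => ?_
      simp only [LinearMap.compl₁₂_apply, LinearEquiv.coe_coe, hAb, LinearMap.smul_apply,
        smul_eq_mul]
      have h4 : ∀ i j, ω (b (Sum.inr i)) (b (Sum.inl j)) =
          a⁻¹ * ω (b' (Sum.inr i)) (b' (Sum.inl j)) := fun i j => by
        rw [hl, hr, map_smul, smul_eq_mul, inv_mul_cancel_left₀ ha]
      rcases i with i | i <;> rcases j with j | j
      · rw [h1, hb'.1, mul_zero]
      · rw [hl, hr, map_smul, LinearMap.smul_apply, smul_eq_mul, inv_mul_cancel_left₀ ha]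
      · exact h4 i j
      · rw [h2, hb'.2.1, mul_zero]
    intro v w
    exact congrArg (fun B : LinearMap.BilinForm K V => B v w) this
  have hrep : ∀ v i, b'.repr v i = b.repr (A v) i := by
    intro v i
    have : A v = ∑ j, b'.repr v j • b j := by
      conv_lhs => rw [← b'.sum_repr v]
      simp [hAb, -Basis.sum_repr]
    rw [this, b.repr_sum_self]
  refine ⟨b', hb', A, ⟨Units.mk0 a⁻¹ (inv_ne_zero ha), hGA⟩, ?_⟩
  have key : ∀ x, A * x * A⁻¹ ∈ SpL (a • ω) b L ↔ x ∈ SpL ω b' L := by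
    intro x
    refine and_congr ?_ (forall_congr' fun i => forall_congr' fun j => ?_)
    · rw [isSp_smul ha]
      constructor
      · intro h v w
        have := h (A v) (A w)
        simp only [LinearEquiv.mul_apply, hA'', hGA] at this
        exact mul_left_cancel₀ (inv_ne_zero ha) this
      · intro h v w
        simp only [LinearEquiv.mul_apply]
        rw [hGA, h, ← hGA, hA', hA']
    · rw [LinearMap.toMatrix_apply, LinearMap.toMatrix_apply, hrep]
      simp only [LinearEquiv.coe_coe, LinearEquiv.mul_apply]
      rw [← hAb j, hA'']
  ext g
  constructor
  · intro hg
    have e : A * (A⁻¹ * g * A) * A⁻¹ = g := by group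
    exact ⟨A⁻¹ * g * A, (key _).1 (by rwa [e]), e⟩
  · rintro ⟨x, hx, rfl⟩
    exact (key x).2 hx

end Rescaling

/-! ### The classification -/

/-- **Theorem (classification of symplectic subgroups containing a transvection).**
Let `K` be a finite field of characteristic `ℓ ≥ 5` and `V` a symplectic `K`-vector space of
dimension `n`. Any subgroup `G ≤ GSp(V)` containing a nontrivial symplectic transvection is
(1) reducible, or (2) permutes transitively the summands of a decomposition of `V` into
mutually orthogonal nonsingular symplectic subspaces of equal dimension `m < n`, or
(3) the subgroup generated by the symplectic transvections in `G` is conjugate in `GSp(V)`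
to `Sp_n(L)` for some subfield `L ⊆ K`. -/
theorem transvection_classification
    {K : Type*} [Field K] [Fintype K] {ℓ : ℕ} (hℓp : ℓ.Prime) (hchar : CharP K ℓ)
    (hℓ5 : 5 ≤ ℓ)
    {V : Type*} [AddCommGroup V] [Module K V] [FiniteDimensional K V]
    {n : ℕ} (hn : finrank K V = n)
    (ω : LinearMap.BilinForm K V) (hAlt : ω.IsAlt) (hNd : ω.Nondegenerate)
    (G : Subgroup (V ≃ₗ[K] V)) (hG : ∀ g ∈ G, IsGSp ω g)
    (hTrans : ∃ τ ∈ G, τ ≠ 1 ∧ IsSymplecticTransvection ω τ) :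
    -- (1) reducible
    (∃ S : Submodule K V, S ≠ ⊥ ∧ S ≠ ⊤ ∧ ∀ g ∈ G, S.map (g : V →ₗ[K] V) = S) ∨
    -- (2) imprimitive: an orthogonal decomposition permuted transitively by `G`
    (∃ (h m : ℕ) (S : Fin h → Submodule K V),
      2 ≤ h ∧ m < n ∧ h * m = n ∧
      (∀ i, finrank K (S i) = m) ∧
      (∀ i j, i ≠ j → ∀ v ∈ S i, ∀ w ∈ S j, ω v w = 0) ∧
      (∀ i, ∀ v ∈ S i, (∀ w ∈ S i, ω v w = 0) → v = 0) ∧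
      DirectSum.IsInternal S ∧
      (∀ g ∈ G, ∃ σ : Equiv.Perm (Fin h), ∀ i, (S i).map (g : V →ₗ[K] V) = S (σ i)) ∧
      (∀ i j, ∃ g ∈ G, (S i).map (g : V →ₗ[K] V) = S j)) ∨
    -- (3) huge: the transvections of `G` generate a conjugate of `Sp_n(L)`
    (∃ (L : Subfield K) (m : ℕ) (b : Basis (Fin m ⊕ Fin m) K V),
      IsSymplecticBasis ω b ∧
      ∃ A : V ≃ₗ[K] V, IsGSp ω A ∧
        ((Subgroup.closure {τ : V ≃ₗ[K] V | τ ∈ G ∧ IsSymplecticTransvection ω τ} :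
            Subgroup (V ≃ₗ[K] V)) : Set (V ≃ₗ[K] V)) =
          (fun x => A * x * A⁻¹) '' SpL ω b L) := by
  classical
  by_cases hred : ∃ S : Submodule K V, S ≠ ⊥ ∧ S ≠ ⊤ ∧ ∀ g ∈ G, S.map (g : V →ₗ[K] V) = S
  · exact Or.inl hred
  right
  have hirr : ∀ S : Submodule K V, (∀ g ∈ G, S.map (g : V →ₗ[K] V) = S) → S = ⊥ ∨ S = ⊤ := by
    intro S hS
    by_contra hcon
    push Not at hcon
    exact hred ⟨S, hcon.1, hcon.2, hS⟩
  obtain ⟨τ, hτG, hτ1, hτ⟩ := hTrans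
  obtain ⟨z, a, rfl⟩ := exists_tv hAlt hNd hτ
  have hz0 : z ≠ 0 := by
    rintro rfl
    exact hτ1 (tv_zero_left hAlt a)
  have ha : a ≠ 0 := by
    rintro rfl
    exact hτ1 (tv_zero hAlt z)
  -- for the form `a • ω` the given transvection has parameter `1`
  have hA : (a • ω).IsAlt := fun x => by simp [hAlt.self_eq_zero]
  have hN : (a • ω).Nondegenerate := by
    refine ⟨fun x hx => hNd.1 x fun y => ?_, fun x hx => hNd.2 x fun y => ?_⟩
    · simpa [ha] using hx y
    · simpa [ha] using hx y
  have hGa : ∀ g ∈ G, IsGSp (a • ω) g := by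
    intro g hg
    obtain ⟨α, hα⟩ := hG g hg
    refine ⟨α, fun v w => ?_⟩
    simp only [LinearMap.smul_apply, smul_eq_mul, hα]
    ring
  have h1 : (1 : K) ∈ rg hA G z := by
    rw [mem_rg]
    convert hτG using 1
    ext u
    simp [tv_apply]
  have hzc : IsCtr hA G z := ⟨hz0, 1, h1, one_ne_zero⟩
  by_cases hconn : ∀ u v, IsCtr hA G u → IsCtr hA G v → Conn hA G u v
  · right
    obtain ⟨L, E, hsm, hsep, hpair, htv, hform⟩ := exists_lattice hℓp hℓ5 hN h1 hzc
      (span_ctr hA hGa hirr ⟨z, hzc⟩) (fun v hv => hconn z v hzc hv)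
    obtain ⟨m, b, hb, hbE⟩ := exists_symplecticBasis hA hsm hsep hpair
    have hcl := closure_eq hA hN hsm hsep hpair htv hform hb hbE
    obtain ⟨b', hb', A, hAG, hconj⟩ := exists_basis_conj ha hb L
    refine ⟨L, m, b', hb', A, hAG, ?_⟩
    rw [← hconj, ← hcl]
    simp only [isST_smul ha]
  · left
    push Not at hconn
    obtain ⟨h, m, S, c1, c2, c3, c4, c5, c6, c7⟩ := imprimitive hA hn hN hGa hirr hconn
    refine ⟨h, m, S, c1, c2, c3, c4, fun i j hij v hv w hw => ?_, fun i v hv hvw => ?_, c7⟩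
    · simpa [ha] using c5 i j hij v hv w hw
    · exact c6 i v hv fun w hw => by simp [hvw w hw]
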